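/- arXiv:1901.02734 — 14 statements merged into one kernel-verified Lean document; each statement's English description precedes it below -/
import Mathlib

section
/- Let (Ω, μ) be a measure space with μ(Ω) < ∞, let a : Ω → ℝ be a bounded measurable function, G : Ω → ℝ a nonnegative measurable function, λ > 0 and t > 0 real numbers, and let u : Ω → ℝ be measurable with 0 ≤ u < 1 μ-almost everywhere. Assume the functions e^a(1−u)^{−2t−2}G, e^a(1−u)^{−(2t+3)}, e^a(1−u)^{−(t+3)} and e^a(1−u)^{−3}((1−u)^{−t}−1)² are μ-integrable, and that (h1) t²∫_Ω e^a(1−u)^{−2t−2}G dμ ≥ 2λ∫_Ω e^a(1−u)^{−3}((1−u)^{−t}−1)² dμ and (h2) (2t+1)∫_Ω e^a(1−u)^{−2t−2}G dμ ≤ λ∫_Ω e^a(1−u)^{−(2t+3)} dμ. Then (2/t² − 1/(2t+1)) ∫_Ω e^a(1−u)^{−(2t+3)} dμ ≤ (4/t²) ∫_Ω e^a(1−u)^{−(t+3)} dμ. -/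
open MeasureTheory Real

theorem mems_key_combination_step
    {Ω : Type*} [MeasurableSpace Ω] (μ : Measure Ω) [IsFiniteMeasure μ]
    (a G u : Ω → ℝ) (lam t : ℝ)
    (ha : Measurable a) (hbd : ∃ C, ∀ x, |a x| ≤ C)
    (hG : Measurable G) (hGnonneg : ∀ x, 0 ≤ G x)
    (hu : Measurable u) (hu01 : ∀ᵐ x ∂μ, 0 ≤ u x ∧ u x < 1)
    (hlam : 0 < lam) (ht : 0 < t)
    (hint1 : Integrable (fun x => exp (a x) * (1 - u x) ^ (-(2*t+2)) * G x) μ)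
    (hint2 : Integrable (fun x => exp (a x) * (1 - u x) ^ (-(2*t+3))) μ)
    (hint3 : Integrable (fun x => exp (a x) * (1 - u x) ^ (-(t+3))) μ)
    (hint4 : Integrable
      (fun x => exp (a x) * (1 - u x) ^ (-(3:ℝ)) * ((1 - u x) ^ (-t) - 1)^2) μ)
    (h1 : t^2 * ∫ x, exp (a x) * (1 - u x) ^ (-(2*t+2)) * G x ∂μ ≥
      2 * lam * ∫ x, exp (a x) * (1 - u x) ^ (-(3:ℝ)) * ((1 - u x) ^ (-t) - 1)^2 ∂μ)
    (h2 : (2*t+1) * ∫ x, exp (a x) * (1 - u x) ^ (-(2*t+2)) * G x ∂μ ≤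
      lam * ∫ x, exp (a x) * (1 - u x) ^ (-(2*t+3)) ∂μ) :
    (2/t^2 - 1/(2*t+1)) * ∫ x, exp (a x) * (1 - u x) ^ (-(2*t+3)) ∂μ ≤
      (4/t^2) * ∫ x, exp (a x) * (1 - u x) ^ (-(t+3)) ∂μ := by
  have key : (∫ x, exp (a x) * (1 - u x) ^ (-(2*t+3)) ∂μ)
      - 2 * (∫ x, exp (a x) * (1 - u x) ^ (-(t+3)) ∂μ) ≤
      ∫ x, exp (a x) * (1 - u x) ^ (-(3:ℝ)) * ((1 - u x) ^ (-t) - 1)^2 ∂μ := by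
    rw [← integral_const_mul, ← integral_sub hint2 (hint3.const_mul 2)]
    refine integral_mono_ae (hint2.sub (hint3.const_mul 2)) hint4 ?_
    filter_upwards [hu01] with x hx
    have hp : 0 < 1 - u x := by linarith [hx.2]
    have e1 : (1 - u x) ^ (-(2*t+3)) =
        (1 - u x) ^ (-(3:ℝ)) * ((1 - u x) ^ (-t) * (1 - u x) ^ (-t)) := by
      rw [← rpow_add hp, ← rpow_add hp]; congr 1; ring
    have e2 : (1 - u x) ^ (-(t+3)) = (1 - u x) ^ (-(3:ℝ)) * (1 - u x) ^ (-t) := by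
      rw [← rpow_add hp]; congr 1; ring
    have h3 : 0 ≤ exp (a x) * (1 - u x) ^ (-(3:ℝ)) := by positivity
    simp only [e1, e2]
    nlinarith [h3]
  generalize (∫ x, exp (a x) * (1 - u x) ^ (-(2*t+3)) ∂μ) = K at *
  generalize (∫ x, exp (a x) * (1 - u x) ^ (-(t+3)) ∂μ) = L at *
  generalize (∫ x, exp (a x) * (1 - u x) ^ (-(3:ℝ)) * ((1 - u x) ^ (-t) - 1)^2 ∂μ) = J at *
  generalize (∫ x, exp (a x) * (1 - u x) ^ (-(2*t+2)) * G x ∂μ) = I at *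
  have hs : 0 < 2 * t + 1 := by linarith
  have h4 : 2 * lam * (K - 2 * L) ≤ t^2 * I :=
    le_trans (mul_le_mul_of_nonneg_left key (by positivity)) h1
  have h5 : lam * ((2*t+1) * (2 * (K - 2 * L))) ≤ lam * (t^2 * K) := by
    have h6 := mul_le_mul_of_nonneg_left h4 hs.le
    have h7 := mul_le_mul_of_nonneg_left h2 (sq_nonneg t)
    linarith
  have h8 := le_of_mul_le_mul_left h5 hlam
  have e : (4/t^2) * L - (2/t^2 - 1/(2*t+1)) * K =
      (t^2 * K - (2*t+1) * (2 * (K - 2 * L))) / (t^2 * (2*t+1)) := by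
    field_simp
    ring
  have : 0 ≤ (t^2 * K - (2*t+1) * (2 * (K - 2 * L))) / (t^2 * (2*t+1)) :=
    div_nonneg (by linarith) (by positivity)
  linarith
end

section
/- Let (Ω, μ) be a measure space with μ(Ω) < ∞, let a : Ω → ℝ be a bounded measurable function, G : Ω → ℝ a nonnegative measurable function, λ > 0, and let t be a real number with 0 < t < 2 + √6. Let u : Ω → ℝ be measurable with 0 ≤ u < 1 μ-almost everywhere, and assume the functions e^a(1−u)^{−2t−2}G, e^a(1−u)^{−(2t+3)}, e^a(1−u)^{−(t+3)} and e^a(1−u)^{−3}((1−u)^{−t}−1)² are μ-integrable. If (h1) t²∫_Ω e^a(1−u)^{−2t−2}G dμ ≥ 2λ∫_Ω e^a(1−u)^{−3}((1−u)^{−t}−1)² dμ and (h2) (2t+1)∫_Ω e^a(1−u)^{−2t−2}G dμ ≤ λ∫_Ω e^a(1−u)^{−(2t+3)} dμ, then ∫_Ω e^a(1−u)^{−(2t+3)} dμ ≤ [4(2t+1)/(2+4t−t²)]^{(2t+3)/t} ∫_Ω e^a dμ. -/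
open MeasureTheory Real

theorem mems_uniform_Lp_estimate
    {Ω : Type*} [MeasurableSpace Ω] (μ : Measure Ω) [IsFiniteMeasure μ]
    (a G u : Ω → ℝ) (lam t : ℝ)
    (ha : Measurable a) (hbd : ∃ C, ∀ x, |a x| ≤ C)
    (hG : Measurable G) (hGnonneg : ∀ x, 0 ≤ G x)
    (hu : Measurable u) (hu01 : ∀ᵐ x ∂μ, 0 ≤ u x ∧ u x < 1)
    (hlam : 0 < lam) (ht : 0 < t) (ht' : t < 2 + Real.sqrt 6)
    (hint1 : Integrable (fun x => exp (a x) * (1 - u x) ^ (-(2*t+2)) * G x) μ)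
    (hint2 : Integrable (fun x => exp (a x) * (1 - u x) ^ (-(2*t+3))) μ)
    (hint3 : Integrable (fun x => exp (a x) * (1 - u x) ^ (-(t+3))) μ)
    (hint4 : Integrable
      (fun x => exp (a x) * (1 - u x) ^ (-(3:ℝ)) * ((1 - u x) ^ (-t) - 1)^2) μ)
    (h1 : t^2 * ∫ x, exp (a x) * (1 - u x) ^ (-(2*t+2)) * G x ∂μ ≥
      2 * lam * ∫ x, exp (a x) * (1 - u x) ^ (-(3:ℝ)) * ((1 - u x) ^ (-t) - 1)^2 ∂μ)
    (h2 : (2*t+1) * ∫ x, exp (a x) * (1 - u x) ^ (-(2*t+2)) * G x ∂μ ≤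
      lam * ∫ x, exp (a x) * (1 - u x) ^ (-(2*t+3)) ∂μ) :
    ∫ x, exp (a x) * (1 - u x) ^ (-(2*t+3)) ∂μ ≤
      (4*(2*t+1)/(2+4*t-t^2)) ^ ((2*t+3)/t) * ∫ x, exp (a x) ∂μ := by
  have hD : 0 < 2+4*t-t^2 := by
    have h6 : Real.sqrt 6 ^ 2 = 6 := Real.sq_sqrt (by norm_num)
    have h60 : 2 < Real.sqrt 6 := by
      apply Real.lt_sqrt_of_sq_lt; norm_num
    nlinarith [mul_pos (sub_pos.2 ht') (show 0 < t - 2 + Real.sqrt 6 by linarith)]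
  have hexp : Integrable (fun x => exp (a x)) μ := by
    obtain ⟨C, hC⟩ := hbd
    refine Integrable.of_bound (ha.exp.aestronglyMeasurable) (exp C) (ae_of_all _ fun x => ?_)
    rw [Real.norm_of_nonneg (exp_pos _).le]
    exact exp_le_exp.2 ((le_abs_self _).trans (hC x))
  set K := 4*(2*t+1)/(2+4*t-t^2) with hK
  have hKpos : 0 < K := by positivity
  set X := ∫ x, exp (a x) * (1 - u x) ^ (-(2*t+3)) ∂μ with hX
  set Y := ∫ x, exp (a x) * (1 - u x) ^ (-(t+3)) ∂μ with hY
  set I4 := ∫ x, exp (a x) * (1 - u x) ^ (-(3:ℝ)) * ((1 - u x) ^ (-t) - 1)^2 ∂μ with hI4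
  set I1 := ∫ x, exp (a x) * (1 - u x) ^ (-(2*t+2)) * G x ∂μ with hI1
  set E := ∫ x, exp (a x) ∂μ with hE
  have hA : X - 2 * Y ≤ I4 := by
    rw [hX, hY, hI4, ← integral_const_mul, ← integral_sub hint2 (hint3.const_mul 2)]
    refine integral_mono_ae (hint2.sub (hint3.const_mul 2)) hint4 ?_
    filter_upwards [hu01] with x hx
    have hv : 0 < 1 - u x := by linarith [hx.2]
    have e1 : (1 - u x) ^ (-(2*t+3)) = (1 - u x) ^ (-(3:ℝ)) * ((1 - u x) ^ (-t))^2 := by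
      rw [pow_two, ← Real.rpow_add hv, ← Real.rpow_add hv]; congr 1; ring
    have e2 : (1 - u x) ^ (-(t+3)) = (1 - u x) ^ (-(3:ℝ)) * (1 - u x) ^ (-t) := by
      rw [← Real.rpow_add hv]; congr 1; ring
    have hp : 0 ≤ exp (a x) * (1 - u x) ^ (-(3:ℝ)) := by positivity
    simp only [e1, e2]
    nlinarith
  have hB : X ≤ K * Y := by
    have h3 : 2 * lam * (X - 2 * Y) ≤ t^2 * I1 :=
      (mul_le_mul_of_nonneg_left hA (by positivity)).trans h1
    have h4 : lam * ((2*t+1) * (2 * (X - 2 * Y))) ≤ lam * (t^2 * X) := by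
      have := mul_le_mul_of_nonneg_left h3 (show 0 ≤ 2*t+1 by linarith)
      have := mul_le_mul_of_nonneg_left h2 (sq_nonneg t)
      linarith
    have h5 := le_of_mul_le_mul_left h4 hlam
    rw [hK, div_mul_eq_mul_div, le_div_iff₀ hD]
    linarith
  have hs : 0 < 2*t+3 := by linarith
  have hC : K * Y ≤ (t+3)/(2*t+3) * X + t/(2*t+3) * K ^ ((2*t+3)/t) * E := by
    rw [hX, hY, hE, ← integral_const_mul, ← integral_const_mul, ← integral_const_mul,
      ← integral_add (hint2.const_mul _) (hexp.const_mul _)]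
    refine integral_mono_ae (hint3.const_mul _)
      ((hint2.const_mul _).add (hexp.const_mul _)) ?_
    filter_upwards [hu01] with x hx
    have hv : 0 < 1 - u x := by linarith [hx.2]
    have := Real.geom_mean_le_arith_mean2_weighted
      (show 0 ≤ (t+3)/(2*t+3) by positivity) (show 0 ≤ t/(2*t+3) by positivity)
      (show 0 ≤ (1 - u x) ^ (-(2*t+3)) by positivity)
      (show 0 ≤ K ^ ((2*t+3)/t) by positivity) (by field_simp; ring)
    rw [← Real.rpow_mul hv.le, ← Real.rpow_mul hKpos.le,
      show -(2*t+3) * ((t+3)/(2*t+3)) = -(t+3) by field_simp,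
      show (2*t+3)/t * (t/(2*t+3)) = 1 by field_simp, Real.rpow_one] at this
    have := mul_le_mul_of_nonneg_left this (exp_pos (a x)).le
    linarith
  have hF := hB.trans hC
  have hθ : (t+3)/(2*t+3) = 1 - t/(2*t+3) := by field_simp; ring
  rw [hθ] at hF
  have hpos : 0 < t/(2*t+3) := by positivity
  refine le_of_mul_le_mul_left ?_ hpos
  linarith
end

section
/- Let (Ω, μ) be a measure space with μ(Ω) < ∞, let a : Ω → ℝ be a bounded measurable function, G : Ω → ℝ a nonnegative measurable function, λ > 0 and t > 0 real numbers, and let u : Ω → ℝ be a nonnegative measurable function. Assume the functions e^{a+2tu}G, e^{a+(2t+1)u}, e^{a+(t+1)u} and e^{a+u}(e^{tu}−1)² are μ-integrable, and that (h1) t²∫_Ω e^{a+2tu}G dμ ≥ λ∫_Ω e^{a+u}(e^{tu}−1)² dμ and (h2) 2t∫_Ω e^{a+2tu}G dμ ≤ λ∫_Ω e^{a+(2t+1)u} dμ. Then (1/t² − 1/(2t)) ∫_Ω e^{a+(2t+1)u} dμ ≤ (2/t²) ∫_Ω e^{a+(t+1)u} dμ. -/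
open MeasureTheory Real

theorem gelfand_key_combination_step
    {Ω : Type*} [MeasurableSpace Ω] (μ : Measure Ω) [IsFiniteMeasure μ]
    (a G u : Ω → ℝ) (lam t : ℝ)
    (ha : Measurable a) (hbd : ∃ C, ∀ x, |a x| ≤ C)
    (hG : Measurable G) (hGnonneg : ∀ x, 0 ≤ G x)
    (hu : Measurable u) (hu0 : ∀ x, 0 ≤ u x)
    (hlam : 0 < lam) (ht : 0 < t)
    (hint1 : Integrable (fun x => exp (a x + 2*t*u x) * G x) μ)
    (hint2 : Integrable (fun x => exp (a x + (2*t+1)*u x)) μ)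
    (hint3 : Integrable (fun x => exp (a x + (t+1)*u x)) μ)
    (hint4 : Integrable (fun x => exp (a x + u x) * (exp (t*u x) - 1)^2) μ)
    (h1 : t^2 * ∫ x, exp (a x + 2*t*u x) * G x ∂μ ≥
      lam * ∫ x, exp (a x + u x) * (exp (t*u x) - 1)^2 ∂μ)
    (h2 : 2*t * ∫ x, exp (a x + 2*t*u x) * G x ∂μ ≤
      lam * ∫ x, exp (a x + (2*t+1)*u x) ∂μ) :
    (1/t^2 - 1/(2*t)) * ∫ x, exp (a x + (2*t+1)*u x) ∂μ ≤
      (2/t^2) * ∫ x, exp (a x + (t+1)*u x) ∂μ := by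
  have key : (∫ x, exp (a x + (2*t+1)*u x) ∂μ) - 2 * (∫ x, exp (a x + (t+1)*u x) ∂μ) ≤
      ∫ x, exp (a x + u x) * (exp (t*u x) - 1)^2 ∂μ := by
    rw [← integral_const_mul, ← integral_sub hint2 (hint3.const_mul 2)]
    refine integral_mono (hint2.sub (hint3.const_mul 2)) hint4 ?_
    intro x
    have e1 : exp (a x + (2*t+1)*u x) = exp (a x + u x) * exp (t*u x)^2 := by
      rw [pow_two, ← exp_add, ← exp_add]; congr 1; ring
    have e2 : exp (a x + (t+1)*u x) = exp (a x + u x) * exp (t*u x) := by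
      rw [← exp_add]; congr 1; ring
    have e3 := exp_pos (a x + u x)
    simp only [e1, e2]
    nlinarith
  generalize (∫ x, exp (a x + (2*t+1)*u x) ∂μ) = I2 at *
  generalize (∫ x, exp (a x + (t+1)*u x) ∂μ) = I3 at *
  generalize (∫ x, exp (a x + u x) * (exp (t*u x) - 1)^2 ∂μ) = J at *
  generalize (∫ x, exp (a x + 2*t*u x) * G x ∂μ) = K at *
  have hJ : J ≤ t / 2 * I2 := by
    refine le_of_mul_le_mul_left ?_ hlam
    have := mul_le_mul_of_nonneg_left h2 (by positivity : (0:ℝ) ≤ t / 2)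
    linarith
  have h : (I2 - t / 2 * I2) / t^2 ≤ (2 * I3) / t^2 := by
    gcongr
    linarith
  have l : (1/t^2 - 1/(2*t)) * I2 = (I2 - t / 2 * I2) / t^2 := by
    field_simp
  have r : 2/t^2 * I3 = (2 * I3) / t^2 := by ring
  rw [l, r]
  exact h
end

section
/- Let (Ω, μ) be a measure space with μ(Ω) < ∞, let a : Ω → ℝ be a bounded measurable function, G : Ω → ℝ a nonnegative measurable function, λ > 0, and let t be a real number with 0 < t < 2. Let u : Ω → ℝ be a nonnegative measurable function, and assume the functions e^{a+2tu}G, e^{a+(2t+1)u}, e^{a+(t+1)u} and e^{a+u}(e^{tu}−1)² are μ-integrable. If (h1) t²∫_Ω e^{a+2tu}G dμ ≥ λ∫_Ω e^{a+u}(e^{tu}−1)² dμ and (h2) 2t∫_Ω e^{a+2tu}G dμ ≤ λ∫_Ω e^{a+(2t+1)u} dμ, then ∫_Ω e^{a+(2t+1)u} dμ ≤ (4/(2−t))^{(2t+1)/t} ∫_Ω e^a dμ. -/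
open MeasureTheory Real

theorem gelfand_uniform_Lp_estimate
    {Ω : Type*} [MeasurableSpace Ω] (μ : Measure Ω) [IsFiniteMeasure μ]
    (a G u : Ω → ℝ) (lam t : ℝ)
    (ha : Measurable a) (hbd : ∃ C, ∀ x, |a x| ≤ C)
    (hG : Measurable G) (hGnonneg : ∀ x, 0 ≤ G x)
    (hu : Measurable u) (hu0 : ∀ x, 0 ≤ u x)
    (hlam : 0 < lam) (ht : 0 < t) (ht' : t < 2)
    (hint1 : Integrable (fun x => exp (a x + 2*t*u x) * G x) μ)
    (hint2 : Integrable (fun x => exp (a x + (2*t+1)*u x)) μ)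
    (hint3 : Integrable (fun x => exp (a x + (t+1)*u x)) μ)
    (hint4 : Integrable (fun x => exp (a x + u x) * (exp (t*u x) - 1)^2) μ)
    (h1 : t^2 * ∫ x, exp (a x + 2*t*u x) * G x ∂μ ≥
      lam * ∫ x, exp (a x + u x) * (exp (t*u x) - 1)^2 ∂μ)
    (h2 : 2*t * ∫ x, exp (a x + 2*t*u x) * G x ∂μ ≤
      lam * ∫ x, exp (a x + (2*t+1)*u x) ∂μ) :
    ∫ x, exp (a x + (2*t+1)*u x) ∂μ ≤
      (4/(2-t)) ^ ((2*t+1)/t) * ∫ x, exp (a x) ∂μ := by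
  have hKint : Integrable (fun x => exp (a x)) μ := by
    obtain ⟨C, hC⟩ := hbd
    refine Integrable.of_bound (Real.measurable_exp.comp ha).aestronglyMeasurable (exp C) ?_
    filter_upwards with x
    rw [Real.norm_of_nonneg (exp_pos _).le]
    exact exp_le_exp.mpr (le_trans (le_abs_self _) (hC x))
  have hs : 0 < 2 - t := by linarith
  -- step 1: expand the square
  have e1 : ∫ x, exp (a x + (2*t+1)*u x) ∂μ - 2 * ∫ x, exp (a x + (t+1)*u x) ∂μ
      ≤ ∫ x, exp (a x + u x) * (exp (t*u x) - 1)^2 ∂μ := by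
    rw [← integral_const_mul, ← integral_sub hint2 (hint3.const_mul 2)]
    refine integral_mono (hint2.sub (hint3.const_mul 2)) hint4 ?_
    intro x
    have q1 : exp (a x + (2*t+1)*u x) = exp (a x + u x) * exp (t*u x) ^ 2 := by
      rw [← Real.exp_nat_mul, ← Real.exp_add]; congr 1; push_cast; ring
    have q2 : exp (a x + (t+1)*u x) = exp (a x + u x) * exp (t*u x) := by
      rw [← Real.exp_add]; congr 1; ring
    have q3 := exp_pos (a x + u x)
    simp only [q1, q2]
    nlinarith
  set I := ∫ x, exp (a x + (2*t+1)*u x) ∂μ with hI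
  set J := ∫ x, exp (a x + (t+1)*u x) ∂μ with hJ
  set K := ∫ x, exp (a x) ∂μ with hK
  set S := ∫ x, exp (a x + u x) * (exp (t*u x) - 1)^2 ∂μ with hS
  set D := ∫ x, exp (a x + 2*t*u x) * G x ∂μ with hD
  have e2 : S ≤ t/2 * I := by
    have : lam * S ≤ lam * (t/2 * I) := by
      have := mul_le_mul_of_nonneg_left h2 (by positivity : 0 ≤ t/2)
      nlinarith
    exact le_of_mul_le_mul_left this hlam
  have e3 : I ≤ 4/(2-t) * J := by
    rw [div_mul_eq_mul_div, le_div_iff₀ hs]; linarith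
  set c := 4/(2-t) with hc
  have hc0 : 0 < c := by positivity
  have hpq : ((2*t+1)/(t+1)).HolderConjugate ((2*t+1)/t) := by
    rw [Real.holderConjugate_iff]
    constructor
    · rw [lt_div_iff₀ (by positivity)]; linarith
    · field_simp; ring
  have e4 : c * J ≤ (t+1)/(2*t+1) * I + t/(2*t+1) * c ^ ((2*t+1)/t) * K := by
    rw [hJ, hI, hK, ← integral_const_mul, ← integral_const_mul, ← integral_const_mul,
      ← integral_add (hint2.const_mul _) (hKint.const_mul _)]
    refine integral_mono (hint3.const_mul c) ((hint2.const_mul _).add (hKint.const_mul _)) ?_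
    intro x
    have y := Real.young_inequality_of_nonneg (exp_pos ((t+1)*u x)).le hc0.le hpq
    have z : exp ((t+1)*u x) ^ ((2*t+1)/(t+1)) = exp ((2*t+1)*u x) := by
      rw [← Real.exp_mul]; congr 1; field_simp
    rw [z, div_div_eq_mul_div, div_div_eq_mul_div] at y
    have w := mul_le_mul_of_nonneg_left y (exp_pos (a x)).le
    simp only [Real.exp_add]
    calc _ = exp (a x) * (exp ((t+1)*u x) * c) := by ring
      _ ≤ _ := w
      _ = _ := by ring
  have e5 : t/(2*t+1) * I ≤ t/(2*t+1) * (c ^ ((2*t+1)/t) * K) := by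
    have : (t+1)/(2*t+1) = 1 - t/(2*t+1) := by field_simp; ring
    rw [this] at e4
    linarith
  exact le_of_mul_le_mul_left e5 (by positivity)
end

section
/- Let (Ω, μ) be a measure space with μ(Ω) < ∞, let a : Ω → ℝ be a bounded measurable function, G : Ω → ℝ a nonnegative measurable function, λ > 0, m > 1, b > 0 and t > 0 real numbers with 2bt > 1, and let u : Ω → ℝ be a nonnegative measurable function. Assume the functions e^a(1+u)^{2bt−2}G, e^a(1+u)^{2bt+m−1}, e^a(1+u)^{bt+m−1} and e^a(1+u)^{m−1}((1+u)^{bt}−1)² are μ-integrable, and that (h1) b²t²∫_Ω e^a(1+u)^{2bt−2}G dμ ≥ λm∫_Ω e^a(1+u)^{m−1}((1+u)^{bt}−1)² dμ and (h2) (2bt−1)∫_Ω e^a(1+u)^{2bt−2}G dμ ≤ λ∫_Ω e^a(1+u)^{2bt+m−1} dμ. Then (1 − b²t²/(m(2bt−1))) ∫_Ω e^a(1+u)^{2bt+m−1} dμ ≤ 2 ∫_Ω e^a(1+u)^{bt+m−1} dμ. -/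
open MeasureTheory Real

theorem power_key_combination_step
    {Ω : Type*} [MeasurableSpace Ω] (μ : Measure Ω) [IsFiniteMeasure μ]
    (a G u : Ω → ℝ) (lam m b t : ℝ)
    (ha : Measurable a) (hbd : ∃ C, ∀ x, |a x| ≤ C)
    (hG : Measurable G) (hGnonneg : ∀ x, 0 ≤ G x)
    (hu : Measurable u) (hu0 : ∀ x, 0 ≤ u x)
    (hlam : 0 < lam) (hm : 1 < m) (hb : 0 < b) (ht : 0 < t) (hbt : 1 < 2*b*t)
    (hint1 : Integrable (fun x => exp (a x) * (1 + u x) ^ (2*b*t - 2) * G x) μ)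
    (hint2 : Integrable (fun x => exp (a x) * (1 + u x) ^ (2*b*t + m - 1)) μ)
    (hint3 : Integrable (fun x => exp (a x) * (1 + u x) ^ (b*t + m - 1)) μ)
    (hint4 : Integrable
      (fun x => exp (a x) * (1 + u x) ^ (m - 1) * ((1 + u x) ^ (b*t) - 1)^2) μ)
    (h1 : b^2*t^2 * ∫ x, exp (a x) * (1 + u x) ^ (2*b*t - 2) * G x ∂μ ≥
      lam * m * ∫ x, exp (a x) * (1 + u x) ^ (m - 1) * ((1 + u x) ^ (b*t) - 1)^2 ∂μ)
    (h2 : (2*b*t - 1) * ∫ x, exp (a x) * (1 + u x) ^ (2*b*t - 2) * G x ∂μ ≤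
      lam * ∫ x, exp (a x) * (1 + u x) ^ (2*b*t + m - 1) ∂μ) :
    (1 - b^2*t^2/(m*(2*b*t - 1))) * ∫ x, exp (a x) * (1 + u x) ^ (2*b*t + m - 1) ∂μ ≤
      2 * ∫ x, exp (a x) * (1 + u x) ^ (b*t + m - 1) ∂μ := by
  have key : (∫ x, exp (a x) * (1 + u x) ^ (2*b*t + m - 1) ∂μ)
      - 2 * ∫ x, exp (a x) * (1 + u x) ^ (b*t + m - 1) ∂μ ≤
      ∫ x, exp (a x) * (1 + u x) ^ (m - 1) * ((1 + u x) ^ (b*t) - 1)^2 ∂μ := by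
    rw [← integral_const_mul, ← integral_sub hint2 (hint3.const_mul 2)]
    refine integral_mono (hint2.sub (hint3.const_mul 2)) hint4 ?_
    intro x
    have hp : 0 < 1 + u x := by linarith [hu0 x]
    have e1 : (1 + u x) ^ (2*b*t + m - 1)
        = (1 + u x) ^ (m - 1) * ((1 + u x) ^ (b*t) * (1 + u x) ^ (b*t)) := by
      rw [← rpow_add hp, ← rpow_add hp]; congr 1; ring
    have e2 : (1 + u x) ^ (b*t + m - 1) = (1 + u x) ^ (m - 1) * (1 + u x) ^ (b*t) := by
      rw [← rpow_add hp]; congr 1; ring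
    have h0 : 0 ≤ exp (a x) * (1 + u x) ^ (m - 1) := by positivity
    simp only [e1, e2]
    nlinarith [h0]
  generalize (∫ x, exp (a x) * (1 + u x) ^ (2*b*t + m - 1) ∂μ) = I2 at *
  generalize (∫ x, exp (a x) * (1 + u x) ^ (b*t + m - 1) ∂μ) = I3 at *
  generalize (∫ x, exp (a x) * (1 + u x) ^ (m - 1) * ((1 + u x) ^ (b*t) - 1)^2 ∂μ) = I4 at *
  generalize (∫ x, exp (a x) * (1 + u x) ^ (2*b*t - 2) * G x ∂μ) = I1 at *
  have hc : 0 < 2*b*t - 1 := by linarith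
  have hm0 : 0 < m := by linarith
  have hd : 0 < m * (2*b*t - 1) := mul_pos hm0 hc
  have s1 := mul_le_mul_of_nonneg_left key (mul_pos (mul_pos hlam hm0) hc).le
  have s2 := mul_le_mul_of_nonneg_left h1 hc.le
  have s3 := mul_le_mul_of_nonneg_left h2 (by positivity : 0 ≤ b^2*t^2)
  have s4 : lam * (m * (2*b*t - 1) * (I2 - 2 * I3)) ≤ lam * (b^2*t^2 * I2) := by
    linarith
  have s5 := le_of_mul_le_mul_left s4 hlam
  have s6 : I2 - 2 * I3 ≤ b^2*t^2 * I2 / (m * (2*b*t - 1)) := by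
    rw [le_div_iff₀ hd]; linarith
  have s7 : (1 - b^2*t^2/(m*(2*b*t - 1))) * I2 = I2 - b^2*t^2 * I2 / (m * (2*b*t - 1)) := by
    ring
  rw [s7]; linarith
end

section
/- Let (Ω, μ) be a measure space with μ(Ω) < ∞, let a : Ω → ℝ be a bounded measurable function, G : Ω → ℝ a nonnegative measurable function, λ > 0, m > 1, b > 0 and t > 0 real numbers with m − √(m(m−1)) < bt < m + √(m(m−1)), and let u : Ω → ℝ be a nonnegative measurable function. Assume the functions e^a(1+u)^{2bt−2}G, e^a(1+u)^{2bt+m−1}, e^a(1+u)^{bt+m−1} and e^a(1+u)^{m−1}((1+u)^{bt}−1)² are μ-integrable. If (h1) b²t²∫_Ω e^a(1+u)^{2bt−2}G dμ ≥ λm∫_Ω e^a(1+u)^{m−1}((1+u)^{bt}−1)² dμ and (h2) (2bt−1)∫_Ω e^a(1+u)^{2bt−2}G dμ ≤ λ∫_Ω e^a(1+u)^{2bt+m−1} dμ, then ∫_Ω e^a(1+u)^{2bt+m−1} dμ ≤ [2m(2bt−1)/(m(2bt−1) − b²t²)]^{(2bt+m−1)/(bt)} ∫_Ω e^a dμ.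 -/
open MeasureTheory Real

theorem power_uniform_Lp_estimate
    {Ω : Type*} [MeasurableSpace Ω] (μ : Measure Ω) [IsFiniteMeasure μ]
    (a G u : Ω → ℝ) (lam m b t : ℝ)
    (ha : Measurable a) (hbd : ∃ C, ∀ x, |a x| ≤ C)
    (hG : Measurable G) (hGnonneg : ∀ x, 0 ≤ G x)
    (hu : Measurable u) (hu0 : ∀ x, 0 ≤ u x)
    (hlam : 0 < lam) (hm : 1 < m) (hb : 0 < b) (ht : 0 < t)
    (hbt1 : m - Real.sqrt (m*(m-1)) < b*t) (hbt2 : b*t < m + Real.sqrt (m*(m-1)))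
    (hint1 : Integrable (fun x => exp (a x) * (1 + u x) ^ (2*b*t - 2) * G x) μ)
    (hint2 : Integrable (fun x => exp (a x) * (1 + u x) ^ (2*b*t + m - 1)) μ)
    (hint3 : Integrable (fun x => exp (a x) * (1 + u x) ^ (b*t + m - 1)) μ)
    (hint4 : Integrable
      (fun x => exp (a x) * (1 + u x) ^ (m - 1) * ((1 + u x) ^ (b*t) - 1)^2) μ)
    (h1 : b^2*t^2 * ∫ x, exp (a x) * (1 + u x) ^ (2*b*t - 2) * G x ∂μ ≥
      lam * m * ∫ x, exp (a x) * (1 + u x) ^ (m - 1) * ((1 + u x) ^ (b*t) - 1)^2 ∂μ)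
    (h2 : (2*b*t - 1) * ∫ x, exp (a x) * (1 + u x) ^ (2*b*t - 2) * G x ∂μ ≤
      lam * ∫ x, exp (a x) * (1 + u x) ^ (2*b*t + m - 1) ∂μ) :
    ∫ x, exp (a x) * (1 + u x) ^ (2*b*t + m - 1) ∂μ ≤
      (2*m*(2*b*t - 1)/(m*(2*b*t - 1) - b^2*t^2)) ^ ((2*b*t + m - 1)/(b*t)) *
        ∫ x, exp (a x) ∂μ := by
  obtain ⟨s, hs⟩ : ∃ s, s = b * t := ⟨_, rfl⟩
  have e1 : 2*b*t = 2*s := by rw [hs]; ring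
  have e2 : b^2*t^2 = s^2 := by rw [hs]; ring
  have hs0 : 0 < s := by rw [hs]; positivity
  simp only [e1, e2, ← hs] at *
  have hsq : Real.sqrt (m*(m-1)) ^ 2 = m*(m-1) := Real.sq_sqrt (by nlinarith)
  have hD : 0 < m*(2*s-1) - s^2 := by
    have := abs_lt.mpr (show -Real.sqrt (m*(m-1)) < s - m ∧ s - m < Real.sqrt (m*(m-1)) from
      ⟨by linarith, by linarith⟩)
    have := sq_lt_sq' (show -Real.sqrt (m*(m-1)) < s - m by linarith)
      (show s - m < Real.sqrt (m*(m-1)) by linarith)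
    nlinarith
  have h2s : 0 < 2*s - 1 := by
    by_contra h
    push Not at h
    nlinarith [sq_nonneg s]
  have hea : Integrable (fun x => exp (a x)) μ := by
    obtain ⟨C, hC⟩ := hbd
    refine Integrable.of_bound (C := exp C) (by fun_prop) (Filter.Eventually.of_forall fun x => ?_)
    rw [Real.norm_of_nonneg (exp_pos _).le]
    exact exp_le_exp.mpr ((le_abs_self _).trans (hC x))
  obtain ⟨K, hK⟩ : ∃ K, K = 2*m*(2*s-1)/(m*(2*s-1) - s^2) := ⟨_, rfl⟩
  have hK0 : 0 < K := by rw [hK]; positivity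
  rw [← hK]
  have hlow : ∫ x, (exp (a x) * (1 + u x) ^ (2*s + m - 1)
        - 2 * (exp (a x) * (1 + u x) ^ (s + m - 1))) ∂μ ≤
      ∫ x, exp (a x) * (1 + u x) ^ (m - 1) * ((1 + u x) ^ s - 1)^2 ∂μ := by
    refine integral_mono (hint2.sub (hint3.const_mul 2)) hint4 fun x => ?_
    have hw : 0 < 1 + u x := by linarith [hu0 x]
    have q1 : (1 + u x) ^ (2*s + m - 1) = (1 + u x) ^ (m-1) * ((1 + u x) ^ s * (1 + u x) ^ s) := by
      rw [← rpow_add hw, ← rpow_add hw]; congr 1; ring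
    have q2 : (1 + u x) ^ (s + m - 1) = (1 + u x) ^ (m-1) * (1 + u x) ^ s := by
      rw [← rpow_add hw]; congr 1; ring
    simp only [q1, q2]
    have : 0 < exp (a x) * (1 + u x) ^ (m-1) := by positivity
    nlinarith
  rw [integral_sub hint2 (hint3.const_mul 2), integral_const_mul] at hlow
  have hP : 0 < 2*s + m - 1 := by linarith
  have hQ : 0 < s + m - 1 := by linarith
  have hconj : ((2*s+m-1)/(s+m-1)).HolderConjugate ((2*s+m-1)/s) := by
    refine (Real.holderConjugate_iff).mpr ⟨?_, ?_⟩
    · rw [lt_div_iff₀ hQ]; linarith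
    · field_simp; ring
  have hyoung : ∫ x, K * (exp (a x) * (1 + u x) ^ (s + m - 1)) ∂μ ≤
      ∫ x, ((s+m-1)/(2*s+m-1) * (exp (a x) * (1 + u x) ^ (2*s + m - 1))
        + s/(2*s+m-1) * K ^ ((2*s+m-1)/s) * exp (a x)) ∂μ := by
    refine integral_mono (hint3.const_mul K) ((hint2.const_mul _).add (hea.const_mul _))
      fun x => ?_
    have hw : 0 < 1 + u x := by linarith [hu0 x]
    have y := Real.young_inequality_of_nonneg (rpow_nonneg hw.le (s+m-1)) hK0.le hconj
    rw [← rpow_mul hw.le, mul_div_cancel₀ _ hQ.ne'] at y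
    have y' := mul_le_mul_of_nonneg_left y (exp_pos (a x)).le
    calc K * (exp (a x) * (1 + u x) ^ (s + m - 1))
        = exp (a x) * ((1 + u x) ^ (s + m - 1) * K) := by ring
      _ ≤ _ := y'
      _ = _ := by simp only [div_div_eq_mul_div]; ring
  rw [integral_add (hint2.const_mul _) (hea.const_mul _), integral_const_mul, integral_const_mul,
    integral_const_mul] at hyoung
  generalize (∫ x, exp (a x) * (1 + u x) ^ (2*s + m - 1) ∂μ) = X at *
  generalize (∫ x, exp (a x) * (1 + u x) ^ (s + m - 1) ∂μ) = Y at *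
  generalize (∫ x, exp (a x) * (1 + u x) ^ (m - 1) * ((1 + u x) ^ s - 1)^2 ∂μ) = W at *
  generalize (∫ x, exp (a x) * (1 + u x) ^ (2*s - 2) * G x ∂μ) = I at *
  generalize (∫ x, exp (a x) ∂μ) = Z at *
  generalize K ^ ((2*s+m-1)/s) = L at *
  have hXY : X ≤ K * Y := by
    rw [hK, div_mul_eq_mul_div, le_div_iff₀ hD]
    have k1 : lam * m * (X - 2*Y) ≤ s^2 * I :=
      (mul_le_mul_of_nonneg_left hlow (by positivity)).trans h1
    have k2 := mul_le_mul_of_nonneg_left k1 h2s.le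
    have k3 := mul_le_mul_of_nonneg_left h2 (sq_nonneg s)
    refine le_of_mul_le_mul_left ?_ hlam
    linarith
  have f := hXY.trans hyoung
  have f2 : X * (2*s+m-1) ≤ (s+m-1) * X + s * L * Z := by
    have := mul_le_mul_of_nonneg_right f hP.le
    refine this.trans (le_of_eq ?_)
    have hP' : s*2 + m - 1 ≠ 0 := by intro h; linarith
    field_simp
  refine le_of_mul_le_mul_left ?_ hs0
  linarith
end

section
/- Let N ≥ 1 be an integer, R > 0, let a, ψ : [0,R] → ℝ be continuous with ψ ≥ 0, and write w(r) = e^{a(r)}ψ(r)^{N−1}. Let λ > 0, 0 < t < 2 + √6, and let u : [0,R] → ℝ be continuously differentiable with 0 ≤ u(r) < 1 for every r ∈ [0,R] and u(R) = 0. Assume: (semistability) for every continuously differentiable ξ : [0,R] → ℝ with ξ(R) = 0 one has ∫₀^R w(r)(ξ'(r))² dr ≥ 2λ∫₀^R w(r)(1−u(r))^{−3}ξ(r)² dr; and (weak solution) for every continuously differentiable φ : [0,R] → ℝ with φ(R) = 0 one has ∫₀^R w(r)u'(r)φ'(r) dr = λ∫₀^R w(r)(1−u(r))^{−2}φ(r)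 dr. Then ∫₀^R w(r)(1−u(r))^{−(2t+3)} dr ≤ [4(2t+1)/(2+4t−t²)]^{(2t+3)/t} ∫₀^R w(r) dr. -/
open MeasureTheory Real intervalIntegral

theorem aux_k (M : ℝ) (hM : M < 1) : ∃ k : ℝ → ℝ, ContDiff ℝ 1 k ∧ (∀ x, 0 < k x) ∧
    ∀ x ≤ M, k x = 1 - x := by
  refine ⟨fun x => (1 - x) + Real.smoothTransition ((x - M) * (2 / (1 - M))) * x, ?_, ?_, ?_⟩
  · have h : ContDiff ℝ 1 Real.smoothTransition := Real.smoothTransition.contDiff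
    fun_prop
  · intro x
    have hp : 0 < 1 - M := by linarith
    have h0 := Real.smoothTransition.nonneg ((x - M) * (2 / (1 - M)))
    have h1 := Real.smoothTransition.le_one ((x - M) * (2 / (1 - M)))
    by_cases hx : x < (1 + M) / 2
    · have hx1 : x < 1 := by linarith
      rcases le_or_gt x M with h | h
      · have : Real.smoothTransition ((x - M) * (2 / (1 - M))) = 0 :=
          Real.smoothTransition.zero_of_nonpos
            (mul_nonpos_of_nonpos_of_nonneg (by linarith) (by positivity))
        simp only [this]; linarith
      · by_cases hx0 : 0 ≤ x
        · have := mul_nonneg h0 hx0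
          show 0 < (1 - x) + Real.smoothTransition ((x - M) * (2 / (1 - M))) * x
          linarith
        · show 0 < (1 - x) + Real.smoothTransition ((x - M) * (2 / (1 - M))) * x
          nlinarith
    · have : Real.smoothTransition ((x - M) * (2 / (1 - M))) = 1 := by
        apply Real.smoothTransition.one_of_one_le
        rw [← mul_div_assoc, le_div_iff₀ hp]; linarith
      simp only [this]; linarith
  · intro x hx
    have hp : 0 < 1 - M := by linarith
    have : Real.smoothTransition ((x - M) * (2 / (1 - M))) = 0 :=
      Real.smoothTransition.zero_of_nonpos
        (mul_nonpos_of_nonpos_of_nonneg (by linarith) (by positivity))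
    simp only [this]; linarith

theorem aux_pt (t v C : ℝ) (ht : 0 < t) (hd : 0 < 2 + 4*t - t^2) (hv : 0 < v)
    (hC : C = 4*(2*t+1)/(2+4*t-t^2)) :
    (2+4*t-t^2) * (t/(2*t+3)) * (v ^ (-(2*t+3)) - C ^ ((2*t+3)/t)) ≤
      2*(2*t+1) * (v ^ (-(3:ℝ)) * (v ^ (-t) - 1)^2)
        - t^2 * (v ^ (-(2:ℝ)) * (v ^ (-(2*t+1)) - 1)) := by
  have hC0 : 0 < C := by rw [hC]; positivity
  have h3 : 0 < v ^ (-(3:ℝ)) := rpow_pos_of_pos hv _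
  have h2 : 0 < v ^ (-(2:ℝ)) := rpow_pos_of_pos hv _
  have e1 : v ^ (-(3:ℝ)) * (v ^ (-t) - 1)^2 =
      v ^ (-(2*t+3)) - 2 * v ^ (-(t+3)) + v ^ (-(3:ℝ)) := by
    have a1 : v ^ (-(2*t+3)) = v ^ (-(3:ℝ)) * (v ^ (-t) * v ^ (-t)) := by
      rw [← rpow_add hv, ← rpow_add hv]; congr 1; ring
    have a2 : v ^ (-(t+3)) = v ^ (-(3:ℝ)) * v ^ (-t) := by
      rw [← rpow_add hv]; congr 1; ring
    rw [a1, a2]; ring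
  have e2 : v ^ (-(2:ℝ)) * (v ^ (-(2*t+1)) - 1) = v ^ (-(2*t+3)) - v ^ (-(2:ℝ)) := by
    have a1 : v ^ (-(2*t+3)) = v ^ (-(2:ℝ)) * v ^ (-(2*t+1)) := by
      rw [← rpow_add hv]; congr 1; ring
    rw [a1]; ring
  have hpq : ((2*t+3)/(t+3)).HolderConjugate ((2*t+3)/t) := by
    rw [Real.holderConjugate_iff]
    constructor
    · rw [lt_div_iff₀ (by linarith)]; linarith
    · field_simp; ring
  have Y := Real.young_inequality_of_nonneg (rpow_pos_of_pos hv (-(t+3))).le hC0.le hpq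
  rw [← rpow_mul hv.le] at Y
  have e3 : -(t+3) * ((2*t+3)/(t+3)) = -(2*t+3) := by field_simp
  rw [e3] at Y
  rw [e1, e2]
  have hCd : (2+4*t-t^2) * C = 4*(2*t+1) := by rw [hC]; field_simp
  generalize v ^ (-(2*t+3)) = S at *
  generalize v ^ (-(t+3)) = T at *
  generalize C ^ ((2*t+3)/t) = Q at *
  have Y2 := mul_le_mul_of_nonneg_left Y hd.le
  have e4 : S / ((2*t+3)/(t+3)) + Q / ((2*t+3)/t) = S - (t/(2*t+3)) * (S - Q) := by
    field_simp; ring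
  rw [e4] at Y2
  have e5 : (2+4*t-t^2) * (T * C) = 4*(2*t+1) * T := by rw [← hCd]; ring
  rw [e5] at Y2
  have p1 : 0 ≤ 2*(2*t+1) * v ^ (-(3:ℝ)) := by positivity
  have p2 : 0 ≤ t^2 * v ^ (-(2:ℝ)) := by positivity
  linarith

theorem aux_der (v : ℝ → ℝ) (hv : ContDiff ℝ 1 v) (hp : ∀ x, 0 < v x) (p : ℝ) :
    ContDiff ℝ 1 (fun r => v r ^ p - 1) ∧
    ∀ r, deriv (fun r => v r ^ p - 1) r = deriv v r * p * v r ^ (p - 1) := by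
  constructor
  · exact (hv.rpow_const_of_ne (fun x => (hp x).ne')).sub contDiff_const
  · intro r
    have h : HasDerivAt v (deriv v r) r := (hv.differentiable one_ne_zero r).hasDerivAt
    exact ((h.rpow_const (Or.inl (hp r).ne')).sub_const 1).deriv

theorem radial_mems_uniform_estimate
    (N : ℕ) (hN : 1 ≤ N) (R : ℝ) (hR : 0 < R)
    (a ψ : ℝ → ℝ) (ha : ContinuousOn a (Set.Icc 0 R))
    (hψ : ContinuousOn ψ (Set.Icc 0 R)) (hψ0 : ∀ r ∈ Set.Icc (0:ℝ) R, 0 ≤ ψ r)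
    (w : ℝ → ℝ) (hw : ∀ r, w r = exp (a r) * ψ r ^ (N - 1))
    (lam t : ℝ) (hlam : 0 < lam) (ht : 0 < t) (ht' : t < 2 + Real.sqrt 6)
    (u : ℝ → ℝ) (hu : ContDiff ℝ 1 u)
    (hu01 : ∀ r ∈ Set.Icc (0:ℝ) R, 0 ≤ u r ∧ u r < 1) (huR : u R = 0)
    (hstab : ∀ ξ : ℝ → ℝ, ContDiff ℝ 1 ξ → ξ R = 0 →
      ∫ r in (0:ℝ)..R, w r * (deriv ξ r)^2 ≥
        2 * lam * ∫ r in (0:ℝ)..R, w r * (1 - u r) ^ (-(3:ℝ)) * (ξ r)^2)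
    (hweak : ∀ φ : ℝ → ℝ, ContDiff ℝ 1 φ → φ R = 0 →
      ∫ r in (0:ℝ)..R, w r * deriv u r * deriv φ r =
        lam * ∫ r in (0:ℝ)..R, w r * (1 - u r) ^ (-(2:ℝ)) * φ r) :
    ∫ r in (0:ℝ)..R, w r * (1 - u r) ^ (-(2*t+3)) ≤
      (4*(2*t+1)/(2+4*t-t^2)) ^ ((2*t+3)/t) * ∫ r in (0:ℝ)..R, w r := by
  have hs : Real.sqrt 6 ^ 2 = 6 := Real.sq_sqrt (by norm_num)
  have hs0 : 0 ≤ Real.sqrt 6 := Real.sqrt_nonneg 6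
  have hs2 : 2 < Real.sqrt 6 := by
    rw [Real.lt_sqrt (by norm_num)]; norm_num
  have hd : 0 < 2 + 4*t - t^2 := by
    nlinarith [mul_pos (sub_pos.2 ht') (show 0 < t - 2 + Real.sqrt 6 by linarith)]
  obtain ⟨x0, hx0, hmax⟩ := isCompact_Icc.exists_isMaxOn (Set.nonempty_Icc.2 hR.le)
    hu.continuous.continuousOn
  have hm1 : u x0 < 1 := (hu01 x0 hx0).2
  obtain ⟨M, hM1, hM2⟩ := exists_between hm1
  obtain ⟨k, hk, hkp, hke⟩ := aux_k M hM2
  have hlt : ∀ r ∈ Set.Icc (0:ℝ) R, u r < M := fun r hr => lt_of_le_of_lt (hmax hr) hM1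
  obtain ⟨v, hvdef⟩ : ∃ v : ℝ → ℝ, v = fun r => k (u r) := ⟨_, rfl⟩
  have hv : ContDiff ℝ 1 v := by rw [hvdef]; exact hk.comp hu
  have hvp : ∀ x, 0 < v x := fun x => by rw [hvdef]; exact hkp _
  have hve : ∀ r ∈ Set.Icc (0:ℝ) R, 1 - u r = v r := fun r hr => by
    rw [hvdef]; exact (hke _ (hlt r hr).le).symm
  have hvd : ∀ r ∈ Set.Icc (0:ℝ) R, deriv v r = - deriv u r := fun r hr => by
    have : v =ᶠ[nhds r] fun x => 1 - u x := by
      filter_upwards [hu.continuous.continuousAt.eventually_lt continuousAt_const (hlt r hr)]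
        with x hx
      rw [hvdef]; exact hke _ hx.le
    rw [this.deriv_eq, deriv_const_sub]
  have hRm : R ∈ Set.Icc (0:ℝ) R := ⟨hR.le, le_rfl⟩
  have hvR : v R = 1 := by rw [← hve R hRm, huR]; norm_num
  have hI : Set.uIcc (0:ℝ) R = Set.Icc 0 R := Set.uIcc_of_le hR.le
  have hwc : ContinuousOn w (Set.Icc 0 R) := by
    have : w = fun r => exp (a r) * ψ r ^ (N - 1) := funext hw
    rw [this]; exact (ha.rexp).mul (hψ.pow _)
  have hw0 : ∀ r ∈ Set.Icc (0:ℝ) R, 0 ≤ w r := fun r hr => by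
    rw [hw]; exact mul_nonneg (exp_pos _).le (pow_nonneg (hψ0 r hr) _)
  have hint : ∀ f : ℝ → ℝ, Continuous f →
      IntervalIntegrable (fun r => w r * f r) volume 0 R := fun f hf => by
    apply ContinuousOn.intervalIntegrable
    rw [hI]; exact hwc.mul hf.continuousOn
  have hvc : ∀ p : ℝ, Continuous fun r => v r ^ p := fun p =>
    hv.continuous.rpow_const (fun x => Or.inl (hvp x).ne')
  obtain ⟨c1, d1⟩ := aux_der v hv hvp (-t)
  obtain ⟨c2, d2⟩ := aux_der v hv hvp (-(2*t+1))
  have H1 := hstab _ c1 (by simp [hvR])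
  have H2 := hweak _ c2 (by simp [hvR])
  have L1 : ∫ r in (0:ℝ)..R, w r * (deriv (fun r => v r ^ (-t) - 1) r)^2 =
      t^2 * ∫ r in (0:ℝ)..R, w r * ((deriv u r)^2 * v r ^ (-(2*t+2))) := by
    rw [← intervalIntegral.integral_const_mul]
    apply intervalIntegral.integral_congr
    intro r hr
    rw [hI] at hr
    simp only [d1, hvd r hr]
    have : v r ^ (-(2*t+2)) = v r ^ (-t - 1) * v r ^ (-t - 1) := by
      rw [← rpow_add (hvp r)]; congr 1; ring
    rw [this]; ring
  have L2 : ∫ r in (0:ℝ)..R, w r * deriv u r * deriv (fun r => v r ^ (-(2*t+1)) - 1) r =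
      (2*t+1) * ∫ r in (0:ℝ)..R, w r * ((deriv u r)^2 * v r ^ (-(2*t+2))) := by
    rw [← intervalIntegral.integral_const_mul]
    apply intervalIntegral.integral_congr
    intro r hr
    rw [hI] at hr
    simp only [d2, hvd r hr]
    have : -(2*t+1) - 1 = -(2*t+2) := by ring
    rw [this]; ring
  have R1 : ∫ r in (0:ℝ)..R, w r * (1 - u r) ^ (-(3:ℝ)) * (v r ^ (-t) - 1)^2 =
      ∫ r in (0:ℝ)..R, w r * (v r ^ (-(3:ℝ)) * (v r ^ (-t) - 1)^2) := by
    apply intervalIntegral.integral_congr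
    intro r hr
    rw [hI] at hr
    simp only [hve r hr]; ring
  have R2 : ∫ r in (0:ℝ)..R, w r * (1 - u r) ^ (-(2:ℝ)) * (v r ^ (-(2*t+1)) - 1) =
      ∫ r in (0:ℝ)..R, w r * (v r ^ (-(2:ℝ)) * (v r ^ (-(2*t+1)) - 1)) := by
    apply intervalIntegral.integral_congr
    intro r hr
    rw [hI] at hr
    simp only [hve r hr]; ring
  have X1 : ∫ r in (0:ℝ)..R, w r * (1 - u r) ^ (-(2*t+3)) =
      ∫ r in (0:ℝ)..R, w r * v r ^ (-(2*t+3)) := by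
    apply intervalIntegral.integral_congr
    intro r hr
    rw [hI] at hr
    simp only [hve r hr]
  rw [L1, R1] at H1
  rw [L2, R2] at H2
  rw [X1]
  obtain ⟨C, hC⟩ : ∃ C, C = 4*(2*t+1)/(2+4*t-t^2) := ⟨_, rfl⟩
  rw [← hC]
  have i1 := hint (fun r => v r ^ (-(3:ℝ)) * (v r ^ (-t) - 1)^2)
    ((hvc (-(3:ℝ))).mul (((hvc (-t)).sub continuous_const).pow 2))
  have i2 := hint (fun r => v r ^ (-(2:ℝ)) * (v r ^ (-(2*t+1)) - 1))
    ((hvc (-(2:ℝ))).mul ((hvc (-(2*t+1))).sub continuous_const))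
  have i3 := hint _ (hvc (-(2*t+3)))
  have i4 : IntervalIntegrable w volume 0 R := by
    apply ContinuousOn.intervalIntegrable
    rwa [hI]
  have key : ∫ r in (0:ℝ)..R, ((2+4*t-t^2) * (t/(2*t+3))) *
        (w r * v r ^ (-(2*t+3)) - C ^ ((2*t+3)/t) * w r) ≤
      ∫ r in (0:ℝ)..R, (2*(2*t+1) * (w r * (v r ^ (-(3:ℝ)) * (v r ^ (-t) - 1)^2))
        - t^2 * (w r * (v r ^ (-(2:ℝ)) * (v r ^ (-(2*t+1)) - 1)))) := by
    apply intervalIntegral.integral_mono_on hR.le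
    · exact (i3.sub (i4.const_mul _)).const_mul _
    · exact (i1.const_mul _).sub (i2.const_mul _)
    · intro r hr
      have := mul_le_mul_of_nonneg_left (aux_pt t (v r) C ht hd (hvp r) hC) (hw0 r hr)
      linarith
  rw [intervalIntegral.integral_const_mul, intervalIntegral.integral_sub i3 (i4.const_mul _),
    intervalIntegral.integral_sub (i1.const_mul _) (i2.const_mul _),
    intervalIntegral.integral_const_mul, intervalIntegral.integral_const_mul,
    intervalIntegral.integral_const_mul] at key
  generalize (∫ r in (0:ℝ)..R, w r * (v r ^ (-(3:ℝ)) * (v r ^ (-t) - 1)^2)) = J1 at *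
  generalize (∫ r in (0:ℝ)..R, w r * (v r ^ (-(2:ℝ)) * (v r ^ (-(2*t+1)) - 1))) = J2 at *
  generalize (∫ r in (0:ℝ)..R, w r * ((deriv u r)^2 * v r ^ (-(2*t+2)))) = P at *
  have hJ : 2*(2*t+1)*J1 - t^2*J2 ≤ 0 := by
    have h1 : (2*t+1) * (2*lam*J1) ≤ (2*t+1) * (t^2*P) :=
      mul_le_mul_of_nonneg_left H1 (by linarith)
    have h2 : (2*t+1) * (t^2*P) = t^2 * (lam*J2) := by rw [← H2]; ring
    have h3 : lam * (2*(2*t+1)*J1 - t^2*J2) ≤ 0 := by linarith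
    by_contra hcon
    exact absurd (mul_pos hlam (not_le.1 hcon)) (not_lt.2 h3)
  have hc : 0 < (2+4*t-t^2) * (t/(2*t+3)) := by positivity
  by_contra hcon
  have := mul_pos hc (sub_pos.2 (not_le.1 hcon))
  linarith
end

section
/- Let N ≥ 1 be an integer, R > 0, let a, ψ : [0,R] → ℝ be continuous with ψ ≥ 0, and write w(r) = e^{a(r)}ψ(r)^{N−1}. Let λ > 0, 0 < t < 2, and let u : [0,R] → ℝ be continuously differentiable with u ≥ 0 and u(R) = 0. Assume: (semistability) for every continuously differentiable ξ : [0,R] → ℝ with ξ(R) = 0 one has ∫₀^R w(r)(ξ'(r))² dr ≥ λ∫₀^R w(r)e^{u(r)}ξ(r)² dr; and (weak solution) for every continuously differentiable φ : [0,R] → ℝ with φ(R) = 0 one has ∫₀^R w(r)u'(r)φ'(r) dr = λ∫₀^R w(r)e^{u(r)}φ(r) dr. Then ∫₀^R w(r)e^{(2t+1)u(r)} dr ≤ (4/(2−t))^{(2t+1)/t} ∫₀^R w(r) dr. -/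
open MeasureTheory Real intervalIntegral

theorem radial_gelfand_uniform_estimate
    (N : ℕ) (hN : 1 ≤ N) (R : ℝ) (hR : 0 < R)
    (a ψ : ℝ → ℝ) (ha : ContinuousOn a (Set.Icc 0 R))
    (hψ : ContinuousOn ψ (Set.Icc 0 R)) (hψ0 : ∀ r ∈ Set.Icc (0:ℝ) R, 0 ≤ ψ r)
    (w : ℝ → ℝ) (hw : ∀ r, w r = exp (a r) * ψ r ^ (N - 1))
    (lam t : ℝ) (hlam : 0 < lam) (ht : 0 < t) (ht' : t < 2)
    (u : ℝ → ℝ) (hu : ContDiff ℝ 1 u)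
    (hu0 : ∀ r ∈ Set.Icc (0:ℝ) R, 0 ≤ u r) (huR : u R = 0)
    (hstab : ∀ ξ : ℝ → ℝ, ContDiff ℝ 1 ξ → ξ R = 0 →
      ∫ r in (0:ℝ)..R, w r * (deriv ξ r)^2 ≥
        lam * ∫ r in (0:ℝ)..R, w r * exp (u r) * (ξ r)^2)
    (hweak : ∀ φ : ℝ → ℝ, ContDiff ℝ 1 φ → φ R = 0 →
      ∫ r in (0:ℝ)..R, w r * deriv u r * deriv φ r =
        lam * ∫ r in (0:ℝ)..R, w r * exp (u r) * φ r) :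
    ∫ r in (0:ℝ)..R, w r * exp ((2*t+1) * u r) ≤
      (4/(2-t)) ^ ((2*t+1)/t) * ∫ r in (0:ℝ)..R, w r := by
  have hwc : ContinuousOn w (Set.Icc 0 R) := by
    have : w = fun r => exp (a r) * ψ r ^ (N - 1) := funext hw
    rw [this]
    exact (Real.continuous_exp.comp_continuousOn ha).mul (hψ.pow _)
  have hw0 : ∀ r ∈ Set.Icc (0:ℝ) R, 0 ≤ w r := fun r hr => by
    rw [hw]; exact mul_nonneg (exp_pos _).le (pow_nonneg (hψ0 r hr) _)
  have huc : Continuous u := hu.continuous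
  have hint : ∀ c : ℝ, IntervalIntegrable (fun r => w r * exp (c * u r)) volume 0 R := fun c => by
    apply ContinuousOn.intervalIntegrable_of_Icc hR.le
    exact hwc.mul (by fun_prop)
  have hintw : IntervalIntegrable w volume 0 R := hwc.intervalIntegrable_of_Icc hR.le
  have hder : ∀ c r : ℝ, deriv (fun r => exp (c * u r) - 1) r = exp (c * u r) * (c * deriv u r) := by
    intro c r
    have h1 : HasDerivAt u (deriv u r) r := (hu.differentiable (by norm_num) r).hasDerivAt
    exact ((h1.const_mul c).exp.sub_const 1).deriv
  have hcd : ∀ c : ℝ, ContDiff ℝ 1 (fun r => exp (c * u r) - 1) := fun c => by fun_prop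
  have h1 := hstab (fun r => exp (t * u r) - 1) (hcd t) (by simp [huR])
  have h2 := hweak (fun r => exp (2 * t * u r) - 1) (hcd (2 * t)) (by simp [huR])
  simp only [hder] at h1 h2
  have e1 : ∫ r in (0:ℝ)..R, w r * (exp (t * u r) * (t * deriv u r)) ^ 2
      = t / 2 * ∫ r in (0:ℝ)..R, w r * deriv u r * (exp (2 * t * u r) * (2 * t * deriv u r)) := by
    rw [← intervalIntegral.integral_const_mul]
    congr 1; ext r
    have : exp (2 * t * u r) = exp (t * u r) ^ 2 := by
      rw [← Real.exp_nat_mul]; congr 1; push_cast; ring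
    rw [this]; ring
  have e2 : ∫ r in (0:ℝ)..R, w r * exp (u r) * (exp (t * u r) - 1) ^ 2
      = (∫ r in (0:ℝ)..R, w r * exp ((2*t+1) * u r))
        - 2 * (∫ r in (0:ℝ)..R, w r * exp ((t+1) * u r))
        + ∫ r in (0:ℝ)..R, w r * exp (1 * u r) := by
    rw [← intervalIntegral.integral_const_mul, ← intervalIntegral.integral_sub (hint _)
      ((hint _).const_mul 2), ← intervalIntegral.integral_add
      ((hint _).sub ((hint _).const_mul 2)) (hint _)]
    congr 1; ext r
    have q1 : exp ((2*t+1) * u r) = exp (t * u r) ^ 2 * exp (u r) := by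
      rw [← Real.exp_nat_mul, ← Real.exp_add]; congr 1; push_cast; ring
    have q2 : exp ((t+1) * u r) = exp (t * u r) * exp (u r) := by
      rw [← Real.exp_add]; congr 1; ring
    rw [q1, q2, one_mul]; ring
  have e3 : ∫ r in (0:ℝ)..R, w r * exp (u r) * (exp (2 * t * u r) - 1)
      = (∫ r in (0:ℝ)..R, w r * exp ((2*t+1) * u r))
        - ∫ r in (0:ℝ)..R, w r * exp (1 * u r) := by
    rw [← intervalIntegral.integral_sub (hint _) (hint _)]
    congr 1; ext r
    have q1 : exp ((2*t+1) * u r) = exp (2 * t * u r) * exp (u r) := by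
      rw [← Real.exp_add]; congr 1; ring
    rw [q1, one_mul]; ring
  rw [e1, h2, e2, e3] at h1
  have hD : 0 ≤ ∫ r in (0:ℝ)..R, w r * exp (1 * u r) :=
    intervalIntegral.integral_nonneg hR.le fun r hr => mul_nonneg (hw0 r hr) (exp_pos _).le
  set C : ℝ := 4 / (2 - t) with hC
  have hCpos : 0 < C := div_pos (by norm_num) (by linarith)
  have hY : C * (∫ r in (0:ℝ)..R, w r * exp ((t+1) * u r)) ≤
      (t+1)/(2*t+1) * (∫ r in (0:ℝ)..R, w r * exp ((2*t+1) * u r))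
        + (t/(2*t+1) * C ^ ((2*t+1)/t)) * ∫ r in (0:ℝ)..R, w r := by
    rw [← intervalIntegral.integral_const_mul, ← intervalIntegral.integral_const_mul,
      ← intervalIntegral.integral_const_mul, ← intervalIntegral.integral_add
      ((hint _).const_mul _) (hintw.const_mul _)]
    apply intervalIntegral.integral_mono_on hR.le ((hint _).const_mul _)
      (((hint _).const_mul _).add (hintw.const_mul _))
    intro r hr
    have g := Real.geom_mean_le_arith_mean2_weighted (w₁ := (t+1)/(2*t+1)) (w₂ := t/(2*t+1))
      (p₁ := exp ((2*t+1) * u r)) (p₂ := C ^ ((2*t+1)/t)) (by positivity) (by positivity)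
      (exp_pos _).le (by positivity) (by field_simp; ring)
    rw [← Real.exp_mul, ← Real.rpow_mul hCpos.le] at g
    have k1 : (2*t+1)/t * (t/(2*t+1)) = 1 := by field_simp
    have k2 : (2*t+1) * u r * ((t+1)/(2*t+1)) = (t+1) * u r := by field_simp
    rw [k1, k2, Real.rpow_one] at g
    have := mul_le_mul_of_nonneg_left g (hw0 r hr)
    linarith
  generalize (∫ r in (0:ℝ)..R, w r * exp ((2*t+1) * u r)) = A at *
  generalize (∫ r in (0:ℝ)..R, w r * exp ((t+1) * u r)) = B at *
  generalize (∫ r in (0:ℝ)..R, w r * exp (1 * u r)) = D at *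
  generalize (∫ r in (0:ℝ)..R, w r) = W at *
  generalize C ^ ((2*t+1)/t) = K at *
  have h3 : A - 2 * B + D ≤ t / 2 * (A - D) := by
    refine le_of_mul_le_mul_left ?_ hlam
    linarith
  have h4 : A ≤ C * B := by
    rw [hC, div_mul_eq_mul_div, le_div_iff₀ (by linarith)]
    have := mul_nonneg ht.le hD
    linarith
  have h5 : A ≤ (t+1)/(2*t+1) * A + (t/(2*t+1) * K) * W := h4.trans hY
  have h6 : A - (t+1)/(2*t+1) * A = t/(2*t+1) * A := by field_simp; ring
  have h7 : t/(2*t+1) * A ≤ t/(2*t+1) * (K * W) := by linarith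
  exact le_of_mul_le_mul_left h7 (by positivity)
end

section
/- Let N ≥ 1 be an integer, R > 0, let a, ψ : [0,R] → ℝ be continuous with ψ ≥ 0, and write w(r) = e^{a(r)}ψ(r)^{N−1}. Let λ > 0, m > 1, b > 0 and t > 0 with m − √(m(m−1)) < bt < m + √(m(m−1)), and let u : [0,R] → ℝ be continuously differentiable with u ≥ 0 and u(R) = 0. Assume: (semistability) for every continuously differentiable ξ : [0,R] → ℝ with ξ(R) = 0 one has ∫₀^R w(r)(ξ'(r))² dr ≥ λm∫₀^R w(r)(1+u(r))^{m−1}ξ(r)² dr; and (weak solution) for every continuously differentiable φ : [0,R] → ℝ with φ(R) = 0 one has ∫₀^R w(r)u'(r)φ'(r) dr = λ∫₀^R w(r)(1+u(r))^m φ(r) dr. Then ∫₀^R w(r)(1+u(r))^{2bt+m−1} dr ≤ [2m(2bt−1)/(m(2bt−1) − b²t²)]^{(2bt+m−1)/(bt)} ∫₀^R w(r) dr. -/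
open MeasureTheory Real intervalIntegral

lemma aux_test (q : ℝ) : ∃ F : ℝ → ℝ, ContDiff ℝ 1 F ∧ F 1 = 0 ∧
    (∀ x, 1 ≤ x → F x = x ^ q - 1) ∧ (∀ x, HasDerivAt F (q * (max x 1) ^ (q-1)) x) := by
  have hc : Continuous (fun y : ℝ => q * (max y 1) ^ (q-1)) := by
    refine continuous_const.mul (Continuous.rpow_const (by fun_prop) ?_)
    intro x
    left
    have := le_max_right x 1
    linarith
  have hd : ∀ x, HasDerivAt (fun x => ∫ y in (1:ℝ)..x, q * (max y 1) ^ (q-1))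
      (q * (max x 1) ^ (q-1)) x := fun x => hc.integral_hasStrictDerivAt 1 x |>.hasDerivAt
  refine ⟨fun x => ∫ y in (1:ℝ)..x, q * (max y 1) ^ (q-1), ?_, by simp, ?_, hd⟩
  · rw [contDiff_one_iff_deriv]
    refine ⟨fun x => (hd x).differentiableAt, ?_⟩
    have : deriv (fun x => ∫ y in (1:ℝ)..x, q * (max y 1) ^ (q-1)) =
        fun y : ℝ => q * (max y 1) ^ (q-1) := funext fun x => (hd x).deriv
    rw [this]
    exact hc
  · intro x hx
    have : ∫ y in (1:ℝ)..x, q * (max y 1) ^ (q-1) = x ^ q - 1 ^ q := by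
      refine integral_eq_sub_of_hasDerivAt (f := fun y => y ^ q) ?_ (hc.intervalIntegrable _ _)
      intro y hy
      rw [Set.uIcc_of_le hx] at hy
      rw [max_eq_left hy.1]
      exact Real.hasDerivAt_rpow_const (Or.inl (by linarith [hy.1]))
    simpa using this

lemma aux_young (s p C v : ℝ) (hs : 0 < s) (hp : s < p) (hC : 0 < C) (hv : 0 < v) :
    C * v ^ (p - s) ≤ (1 - s/p) * v ^ p + (s/p) * C ^ (p/s) := by
  have hp0 : 0 < p := hs.trans hp
  have h1 : s / p < 1 := (div_lt_one hp0).2 hp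
  have := Real.geom_mean_le_arith_mean2_weighted (w₁ := 1 - s/p) (w₂ := s/p) (p₁ := v ^ p)
    (p₂ := C ^ (p/s)) (by linarith) (by positivity) (by positivity) (by positivity) (by ring)
  rw [← Real.rpow_mul hv.le, ← Real.rpow_mul hC.le] at this
  have e1 : p * (1 - s/p) = p - s := by field_simp
  have e2 : p / s * (s / p) = 1 := by field_simp
  rw [e1, e2, Real.rpow_one] at this
  linarith

theorem radial_power_uniform_estimate
    (N : ℕ) (hN : 1 ≤ N) (R : ℝ) (hR : 0 < R)
    (a ψ : ℝ → ℝ) (ha : ContinuousOn a (Set.Icc 0 R))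
    (hψ : ContinuousOn ψ (Set.Icc 0 R)) (hψ0 : ∀ r ∈ Set.Icc (0:ℝ) R, 0 ≤ ψ r)
    (w : ℝ → ℝ) (hw : ∀ r, w r = exp (a r) * ψ r ^ (N - 1))
    (lam m b t : ℝ) (hlam : 0 < lam) (hm : 1 < m) (hb : 0 < b) (ht : 0 < t)
    (hbt1 : m - Real.sqrt (m*(m-1)) < b*t) (hbt2 : b*t < m + Real.sqrt (m*(m-1)))
    (u : ℝ → ℝ) (hu : ContDiff ℝ 1 u)
    (hu0 : ∀ r ∈ Set.Icc (0:ℝ) R, 0 ≤ u r) (huR : u R = 0)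
    (hstab : ∀ ξ : ℝ → ℝ, ContDiff ℝ 1 ξ → ξ R = 0 →
      ∫ r in (0:ℝ)..R, w r * (deriv ξ r)^2 ≥
        lam * m * ∫ r in (0:ℝ)..R, w r * (1 + u r) ^ (m-1) * (ξ r)^2)
    (hweak : ∀ φ : ℝ → ℝ, ContDiff ℝ 1 φ → φ R = 0 →
      ∫ r in (0:ℝ)..R, w r * deriv u r * deriv φ r =
        lam * ∫ r in (0:ℝ)..R, w r * (1 + u r) ^ m * φ r) :
    ∫ r in (0:ℝ)..R, w r * (1 + u r) ^ (2*b*t + m - 1) ≤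
      (2*m*(2*b*t - 1)/(m*(2*b*t - 1) - b^2*t^2)) ^ ((2*b*t + m - 1)/(b*t)) *
        ∫ r in (0:ℝ)..R, w r := by
  obtain ⟨s, hs⟩ : ∃ s, s = b * t := ⟨_, rfl⟩
  have hs0 : 0 < s := by rw [hs]; positivity
  have hbb : 2 * b * t = 2 * s := by rw [hs]; ring
  have hbs : b^2*t^2 = s^2 := by rw [hs]; ring
  rw [hbb, hbs, ← hs]
  rw [← hs] at hbt1 hbt2
  have hq : 0 < m * (2 * s - 1) - s^2 := by
    have h1 : (s - m)^2 < (Real.sqrt (m*(m-1)))^2 := sq_lt_sq' (by linarith) (by linarith)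
    rw [Real.sq_sqrt (by nlinarith)] at h1
    nlinarith
  have h2s : 0 < 2 * s - 1 := by
    by_contra h
    nlinarith [sq_nonneg s]
  set p := 2 * s + m - 1 with hp
  have hI : Set.uIcc (0:ℝ) R = Set.Icc 0 R := Set.uIcc_of_le hR.le
  have hwc : ContinuousOn w (Set.uIcc 0 R) := by
    rw [hI]
    have : w = fun r => exp (a r) * ψ r ^ (N - 1) := funext hw
    rw [this]
    fun_prop
  have hw0 : ∀ r ∈ Set.uIcc (0:ℝ) R, 0 ≤ w r := by
    intro r hr
    rw [hI] at hr
    have := hψ0 r hr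
    rw [hw]
    positivity
  have hv1 : ∀ r ∈ Set.uIcc (0:ℝ) R, 1 ≤ 1 + u r := by
    intro r hr
    rw [hI] at hr
    linarith [hu0 r hr]
  have huc : Continuous u := hu.continuous
  have hduc : Continuous (deriv u) := hu.continuous_deriv le_rfl
  have hvc : ∀ q : ℝ, ContinuousOn (fun r => (1 + u r) ^ q) (Set.uIcc 0 R) := by
    intro q
    refine ContinuousOn.rpow_const (by fun_prop) ?_
    intro r hr
    left
    linarith [hv1 r hr]
  have hPi : ∀ q : ℝ, IntervalIntegrable (fun r => w r * (1 + u r) ^ q) volume 0 R :=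
    fun q => (hwc.mul (hvc q)).intervalIntegrable
  have hwi : IntervalIntegrable w volume 0 R := hwc.intervalIntegrable
  have hP0 : ∀ q : ℝ, 0 ≤ ∫ r in (0:ℝ)..R, w r * (1 + u r) ^ q := by
    intro q
    refine integral_nonneg hR.le fun r hr => ?_
    rw [← hI] at hr
    have := hw0 r hr
    have := hv1 r hr
    positivity
  have hder : ∀ (F : ℝ → ℝ) (q : ℝ), (∀ x, HasDerivAt F (q * (max x 1) ^ (q-1)) x) →
      ∀ r ∈ Set.uIcc (0:ℝ) R, deriv (fun r => F (1 + u r)) r =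
        q * (1 + u r) ^ (q-1) * deriv u r := by
    intro F q hF r hr
    have h1 : HasDerivAt (fun r => 1 + u r) (deriv u r) r :=
      ((hu.differentiable one_ne_zero r).hasDerivAt).const_add 1
    have h2 := (hF (1 + u r)).comp r h1
    rw [max_eq_left (hv1 r hr)] at h2
    exact h2.deriv
  obtain ⟨F, hFc, hF1, hFx, hFd⟩ := aux_test s
  obtain ⟨G, hGc, hG1, hGx, hGd⟩ := aux_test (2 * s - 1)
  have hS := hstab (fun r => F (1 + u r)) (hFc.comp (contDiff_const.add hu)) (by simp [huR, hF1])
  have hW := hweak (fun r => G (1 + u r)) (hGc.comp (contDiff_const.add hu)) (by simp [huR, hG1])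
  have eA : ∫ r in (0:ℝ)..R, w r * (deriv (fun r => F (1 + u r)) r)^2 =
      s^2 * ∫ r in (0:ℝ)..R, w r * (1 + u r) ^ (2*s-2) * (deriv u r)^2 := by
    rw [← intervalIntegral.integral_const_mul]
    refine integral_congr fun r hr => ?_
    have hv : 0 < 1 + u r := by linarith [hv1 r hr]
    have e : (1 + u r) ^ (2*s-2) = (1 + u r) ^ (s-1) * (1 + u r) ^ (s-1) := by
      rw [← Real.rpow_add hv]; ring_nf
    simp only [hder F s hFd r hr, e]
    ring
  have eD : ∫ r in (0:ℝ)..R, w r * deriv u r * deriv (fun r => G (1 + u r)) r =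
      (2*s-1) * ∫ r in (0:ℝ)..R, w r * (1 + u r) ^ (2*s-2) * (deriv u r)^2 := by
    rw [← intervalIntegral.integral_const_mul]
    refine integral_congr fun r hr => ?_
    have e : 2*s-1-1 = 2*s-2 := by ring
    simp only [hder G _ hGd r hr, e]
    ring
  have eB : ∫ r in (0:ℝ)..R, w r * (1 + u r) ^ (m-1) * (F (1 + u r))^2 =
      (∫ r in (0:ℝ)..R, w r * (1 + u r) ^ p) - 2 * (∫ r in (0:ℝ)..R, w r * (1 + u r) ^ (p-s))
        + ∫ r in (0:ℝ)..R, w r * (1 + u r) ^ (m-1) := by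
    rw [← intervalIntegral.integral_const_mul, ← integral_sub (hPi _) ((hPi _).const_mul _),
      ← integral_add ((hPi _).sub ((hPi _).const_mul _)) (hPi _)]
    refine integral_congr fun r hr => ?_
    have hv : 0 < 1 + u r := by linarith [hv1 r hr]
    have e : (1 + u r) ^ p = (1 + u r) ^ (m-1) * (1 + u r) ^ s * (1 + u r) ^ s := by
      rw [← Real.rpow_add hv, ← Real.rpow_add hv, hp]; ring_nf
    have e' : (1 + u r) ^ (p-s) = (1 + u r) ^ (m-1) * (1 + u r) ^ s := by
      rw [← Real.rpow_add hv, hp]; ring_nf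
    simp only [hFx _ (hv1 r hr), e, e']
    ring
  have eE : ∫ r in (0:ℝ)..R, w r * (1 + u r) ^ m * G (1 + u r) =
      (∫ r in (0:ℝ)..R, w r * (1 + u r) ^ p) - ∫ r in (0:ℝ)..R, w r * (1 + u r) ^ m := by
    rw [← integral_sub (hPi _) (hPi _)]
    refine integral_congr fun r hr => ?_
    have hv : 0 < 1 + u r := by linarith [hv1 r hr]
    have e : (1 + u r) ^ p = (1 + u r) ^ m * (1 + u r) ^ (2*s-1) := by
      rw [← Real.rpow_add hv, hp]; ring_nf
    simp only [hGx _ (hv1 r hr), e]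
    ring
  rw [eA, eB] at hS
  rw [eD, eE] at hW
  set C := 2*m*(2*s - 1)/(m*(2*s - 1) - s^2) with hC
  have hC0 : 0 < C := by positivity
  have hCe : C * (m*(2*s - 1) - s^2) = 2*m*(2*s - 1) := by
    rw [hC]; field_simp
  have hY : C * (∫ r in (0:ℝ)..R, w r * (1 + u r) ^ (p-s)) ≤
      (1 - s/p) * (∫ r in (0:ℝ)..R, w r * (1 + u r) ^ p)
        + (s/p) * C ^ (p/s) * ∫ r in (0:ℝ)..R, w r := by
    rw [← intervalIntegral.integral_const_mul, ← intervalIntegral.integral_const_mul,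
      ← intervalIntegral.integral_const_mul,
      ← integral_add ((hPi _).const_mul _) (hwi.const_mul _)]
    refine integral_mono_on hR.le ((hPi _).const_mul _)
      (((hPi _).const_mul _).add (hwi.const_mul _)) fun r hr => ?_
    rw [← hI] at hr
    have hv : 0 < 1 + u r := by linarith [hv1 r hr]
    have := mul_le_mul_of_nonneg_left
      (aux_young s p C (1 + u r) hs0 (by rw [hp]; linarith) hC0 hv) (hw0 r hr)
    nlinarith [this]
  have h1 := hP0 (m-1)
  have h2 := hP0 m
  generalize (∫ r in (0:ℝ)..R, w r * (1 + u r) ^ (2*s-2) * (deriv u r)^2) = J at *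
  generalize (∫ r in (0:ℝ)..R, w r * (1 + u r) ^ p) = P at *
  generalize (∫ r in (0:ℝ)..R, w r * (1 + u r) ^ (p-s)) = Q at *
  generalize (∫ r in (0:ℝ)..R, w r * (1 + u r) ^ (m-1)) = A at *
  generalize (∫ r in (0:ℝ)..R, w r * (1 + u r) ^ m) = B at *
  generalize (∫ r in (0:ℝ)..R, w r) = W at *
  have k1 : (2*s-1) * (lam * m * (P - 2 * Q + A)) ≤ s^2 * (lam * (P - B)) := by
    rw [← hW]
    nlinarith [mul_le_mul_of_nonneg_left hS h2s.le]
  have k2 : (2*s-1) * (m * (P - 2 * Q + A)) ≤ s^2 * (P - B) := by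
    refine le_of_mul_le_mul_left ?_ hlam
    linarith [k1]
  have k3 : (m*(2*s-1) - s^2) * P ≤ (m*(2*s-1) - s^2) * (C * Q) := by
    have g1 : 0 ≤ (2*s-1) * m * A := by positivity
    have g2 : 0 ≤ s^2 * B := by positivity
    have : (m*(2*s-1) - s^2) * (C * Q) = 2*m*(2*s - 1) * Q := by rw [← hCe]; ring
    rw [this]
    linarith
  have k4 : P ≤ C * Q := le_of_mul_le_mul_left k3 hq
  have hp0 : 0 < p := by rw [hp]; linarith
  have k5 : (s/p) * P ≤ (s/p) * (C ^ (p/s) * W) := by linarith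
  exact le_of_mul_le_mul_left k5 (by positivity)
end

section
/- Let N ≥ 1 be an integer, R > 0, let a : [0,R] → ℝ be continuous and ψ : [0,R] → ℝ be continuous, nonnegative, and strictly positive on (0,R), and write w(r) = e^{a(r)}ψ(r)^{N−1}. Let λ > 0 and let u : [0,R] → ℝ be continuously differentiable with 0 ≤ u(r) < 1 for all r ∈ [0,R] and u'(r) ≤ 0 for all r, and assume that for every r ∈ (0,R), e^{a(r)}ψ(r)^{N−1}u'(r) = −λ∫₀^r w(s)(1−u(s))^{−2} ds. Then for every p > 1 and every r ∈ (0,R): u(0) ≥ u(r), and there exists c ∈ (0,r) such that u(0) − u(r) ≤ λ r e^{−a(c)}ψ(c)^{1−N} (∫₀^R w(s)(1−u(s))^{−2p} ds)^{1/p} (∫₀^R w(s) ds)^{(p−1)/p}. -/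
open MeasureTheory Real intervalIntegral

theorem memLp_aux (R : ℝ) (f : ℝ → ℝ) (hf : ContinuousOn f (Set.Icc 0 R)) (q : ENNReal) :
    MemLp f q (volume.restrict (Set.Ioc 0 R)) := by
  obtain ⟨C, hC⟩ := isCompact_Icc.exists_bound_of_continuousOn hf
  refine MemLp.of_bound ((hf.mono Set.Ioc_subset_Icc_self).aestronglyMeasurable measurableSet_Ioc) C ?_
  filter_upwards [ae_restrict_mem measurableSet_Ioc] with x hx
  exact hC x (Set.Ioc_subset_Icc_self hx)

theorem radial_mems_oscillation_bound
    (N : ℕ) (hN : 1 ≤ N) (R : ℝ) (hR : 0 < R)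
    (a ψ : ℝ → ℝ) (ha : ContinuousOn a (Set.Icc 0 R))
    (hψ : ContinuousOn ψ (Set.Icc 0 R)) (hψ0 : ∀ r ∈ Set.Icc (0:ℝ) R, 0 ≤ ψ r)
    (hψpos : ∀ r ∈ Set.Ioo (0:ℝ) R, 0 < ψ r)
    (w : ℝ → ℝ) (hw : ∀ r, w r = exp (a r) * ψ r ^ (N - 1))
    (lam : ℝ) (hlam : 0 < lam)
    (u : ℝ → ℝ) (hu : ContDiff ℝ 1 u)
    (hu01 : ∀ r ∈ Set.Icc (0:ℝ) R, 0 ≤ u r ∧ u r < 1)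
    (hu' : ∀ r ∈ Set.Icc (0:ℝ) R, deriv u r ≤ 0)
    (heq : ∀ r ∈ Set.Ioo (0:ℝ) R,
      exp (a r) * ψ r ^ (N - 1) * deriv u r =
        -lam * ∫ s in (0:ℝ)..r, w s * (1 - u s) ^ (-(2:ℝ))) :
    ∀ p : ℝ, 1 < p → ∀ r ∈ Set.Ioo (0:ℝ) R,
      u r ≤ u 0 ∧ ∃ c ∈ Set.Ioo (0:ℝ) r,
        u 0 - u r ≤ lam * r * exp (-(a c)) * ψ c ^ ((1:ℤ) - (N:ℤ)) *
          (∫ s in (0:ℝ)..R, w s * (1 - u s) ^ (-(2*p))) ^ (1/p) *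
          (∫ s in (0:ℝ)..R, w s) ^ ((p-1)/p) := by
  intro p hp r hr
  have hp0 : 0 < p := by linarith
  have hwc : ContinuousOn w (Set.Icc 0 R) := by
    have : w = fun r => exp (a r) * ψ r ^ (N - 1) := funext hw
    rw [this]
    exact ha.rexp.mul (hψ.pow _)
  have hw0 : ∀ s ∈ Set.Icc (0:ℝ) R, 0 ≤ w s := fun s hs => by
    rw [hw]; exact mul_nonneg (exp_pos _).le (pow_nonneg (hψ0 s hs) _)
  have huc : ContinuousOn (fun s => 1 - u s) (Set.Icc 0 R) :=
    (continuous_const.sub hu.continuous).continuousOn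
  have hup : ∀ s ∈ Set.Icc (0:ℝ) R, 0 < 1 - u s := fun s hs => by linarith [(hu01 s hs).2]
  have hvc : ContinuousOn (fun s => (1 - u s) ^ (-(2:ℝ))) (Set.Icc 0 R) :=
    huc.rpow_const fun s hs => Or.inl (hup s hs).ne'
  obtain ⟨q, hq⟩ : ∃ q, q = p / (p - 1) := ⟨_, rfl⟩
  have hpq : p.HolderConjugate q := hq ▸ Real.HolderConjugate.conjExponent hp
  have hq0 : 0 < q := hpq.symm.pos
  have hq1 : 1 / q = (p - 1) / p := by rw [hq, one_div_div]
  have holder := integral_mul_le_Lp_mul_Lq_of_nonneg (μ := volume.restrict (Set.Ioc 0 R)) hpq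
    (f := fun s => w s ^ (1/p) * (1 - u s) ^ (-(2:ℝ))) (g := fun s => w s ^ (1/q))
    (by
      filter_upwards [ae_restrict_mem measurableSet_Ioc] with x hx
      have hx := Set.Ioc_subset_Icc_self hx
      exact mul_nonneg (rpow_nonneg (hw0 x hx) _) (rpow_nonneg (hup x hx).le _))
    (by
      filter_upwards [ae_restrict_mem measurableSet_Ioc] with x hx
      exact rpow_nonneg (hw0 x (Set.Ioc_subset_Icc_self hx)) _)
    (memLp_aux R _ ((hwc.rpow_const fun s hs => Or.inr (by positivity)).mul hvc) _)
    (memLp_aux R _ (hwc.rpow_const fun s hs => Or.inr (by positivity)) _)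
  have e1 : ∫ s in Set.Ioc 0 R, w s ^ (1/p) * (1 - u s) ^ (-(2:ℝ)) * w s ^ (1/q)
      = ∫ s in Set.Ioc 0 R, w s * (1 - u s) ^ (-(2:ℝ)) := by
    refine setIntegral_congr_fun measurableSet_Ioc fun x hx => ?_
    have hx := Set.Ioc_subset_Icc_self hx
    have : w x ^ (1/p) * w x ^ (1/q) = w x := by
      rw [← rpow_add_of_nonneg (hw0 x hx) (by positivity) (by positivity), one_div, one_div,
        hpq.inv_add_inv_eq_one, rpow_one]
    calc _ = (w x ^ (1/p) * w x ^ (1/q)) * (1 - u x) ^ (-(2:ℝ)) := by ring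
      _ = _ := by rw [this]
  have e2 : ∫ s in Set.Ioc 0 R, (w s ^ (1/p) * (1 - u s) ^ (-(2:ℝ))) ^ p
      = ∫ s in Set.Ioc 0 R, w s * (1 - u s) ^ (-(2*p)) := by
    refine setIntegral_congr_fun measurableSet_Ioc fun x hx => ?_
    have hx := Set.Ioc_subset_Icc_self hx
    rw [mul_rpow (rpow_nonneg (hw0 x hx) _) (rpow_nonneg (hup x hx).le _),
      ← rpow_mul (hw0 x hx), ← rpow_mul (hup x hx).le, one_div_mul_cancel hp0.ne', rpow_one,
      neg_mul]
  have e3 : ∫ s in Set.Ioc 0 R, (w s ^ (1/q)) ^ q = ∫ s in Set.Ioc 0 R, w s := by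
    refine setIntegral_congr_fun measurableSet_Ioc fun x hx => ?_
    have hx := Set.Ioc_subset_Icc_self hx
    rw [← rpow_mul (hw0 x hx), one_div_mul_cancel hq0.ne', rpow_one]
  rw [e1, e2, e3, hq1] at holder
  rw [← integral_of_le hR.le, ← integral_of_le hR.le, ← integral_of_le hR.le] at holder
  obtain ⟨c, hc, hcs⟩ := exists_deriv_eq_slope u hr.1 hu.continuous.continuousOn
    (hu.differentiable (by norm_num)).differentiableOn
  have hcR : c ∈ Set.Ioo 0 R := ⟨hc.1, hc.2.trans hr.2⟩
  have hdiff : u 0 - u r = r * (- deriv u c) := by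
    have := hr.1.ne'
    rw [hcs]; field_simp; ring
  have hd := hu' c (Set.Ioo_subset_Icc_self hcR)
  refine ⟨by nlinarith [hr.1], c, hc, ?_⟩
  have hint : ∫ s in (0:ℝ)..c, w s * (1 - u s) ^ (-(2:ℝ))
      ≤ ∫ s in (0:ℝ)..R, w s * (1 - u s) ^ (-(2:ℝ)) := by
    refine integral_mono_interval le_rfl hcR.1.le hcR.2.le ?_ ?_
    · filter_upwards [ae_restrict_mem measurableSet_Ioc] with x hx
      have hx := Set.Ioc_subset_Icc_self hx
      exact mul_nonneg (hw0 x hx) (rpow_nonneg (hup x hx).le _)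
    · apply ContinuousOn.intervalIntegrable
      rw [Set.uIcc_of_le hR.le]
      exact hwc.mul hvc
  have hψc := hψpos c hcR
  have hz : ψ c ^ ((1:ℤ) - (N:ℤ)) = (ψ c ^ (N - 1))⁻¹ := by
    rw [← zpow_natCast, ← zpow_neg]; congr 1; push_cast [hN]; ring
  have hd2 : - deriv u c = lam * exp (-(a c)) * (ψ c ^ (N - 1))⁻¹ *
      ∫ s in (0:ℝ)..c, w s * (1 - u s) ^ (-(2:ℝ)) := by
    have h := heq c hcR
    have h1 := (exp_pos (a c)).ne'
    have h2 := (pow_pos hψc (N - 1)).ne'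
    rw [exp_neg]
    field_simp
    linarith
  rw [hdiff, hd2, hz]
  have hK : 0 ≤ lam * r * exp (-(a c)) * (ψ c ^ (N - 1))⁻¹ := by
    have := hr.1
    positivity
  have := mul_le_mul_of_nonneg_left (hint.trans holder) hK
  linarith
end

section
/- Let N ≥ 1 be an integer, R > 0, let a, ψ : [0,R] → ℝ be continuous with ψ ≥ 0, and write w(r) = e^{a(r)}ψ(r)^{N−1}. Let λ > 0, 0 < t < 2 + √6, and let u : [0,R] → ℝ be continuously differentiable with 0 ≤ u(r) < 1 for every r ∈ [0,R], u(R) = 0, and u nonincreasing on [0,R]. Assume the semistability condition (for every C¹ function ξ with ξ(R) = 0, ∫₀^R w(ξ')² dr ≥ 2λ∫₀^R w(1−u)^{−3}ξ² dr) and the weak-solution condition (for every C¹ function φ with φ(R) = 0, ∫₀^R w u'φ' dr = λ∫₀^R w(1−u)^{−2}φ dr), and suppose there is K ≥ 0 such that u(0) − u(r) ≤ K r for all r ∈ [0,R]. Then ∫₀^R w(r)(1 − u(0) + K r)^{−(2t+3)} dr ≤ [4(2t+1)/(2+4t−t²)]^{(2t+3)/t} ∫₀^R w(r) dr. -/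
open MeasureTheory Real intervalIntegral

theorem mems_pos_ext (δ : ℝ) (hδ : 0 < δ) : ∃ m : ℝ → ℝ, ContDiff ℝ 1 m ∧ (∀ x, 0 < m x) ∧
    ∀ x, δ ≤ x → m x = x := by
  refine ⟨fun x => δ/2 + (x - δ/2) * Real.smoothTransition ((x - δ/2) / (δ/2)), ?_, ?_, ?_⟩
  · have h : ContDiff ℝ 1 Real.smoothTransition := Real.smoothTransition.contDiff
    have h2 : ContDiff ℝ 1 (fun x : ℝ => (x - δ/2) / (δ/2)) := by fun_prop
    have h3 := h.comp h2
    have h4 : ContDiff ℝ 1 (fun x : ℝ => x - δ/2) := by fun_prop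
    exact contDiff_const.add (h4.mul h3)
  · intro x
    rcases le_total x (δ/2) with h | h
    · have : Real.smoothTransition ((x - δ/2) / (δ/2)) = 0 :=
        Real.smoothTransition.zero_of_nonpos
          (div_nonpos_of_nonpos_of_nonneg (by linarith) (by linarith))
      simp only [this]; linarith
    · have := mul_nonneg (sub_nonneg.2 h) (Real.smoothTransition.nonneg ((x - δ/2) / (δ/2)))
      simp only; linarith
  · intro x hx
    have : Real.smoothTransition ((x - δ/2) / (δ/2)) = 1 :=
      Real.smoothTransition.one_of_one_le (by rw [le_div_iff₀ (by linarith)]; linarith)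
    simp only [this]; ring

theorem mems_young (t C x : ℝ) (ht : 0 < t) (hC : 0 < C) (hx : 0 < x) :
    C * x ^ (-(t+3)) ≤ (t+3)/(2*t+3) * x ^ (-(2*t+3)) + t/(2*t+3) * C ^ ((2*t+3)/t) := by
  have h := Real.geom_mean_le_arith_mean2_weighted (w₁ := (t+3)/(2*t+3)) (w₂ := t/(2*t+3))
    (p₁ := x ^ (-(2*t+3))) (p₂ := C ^ ((2*t+3)/t)) (by positivity) (by positivity)
    (by positivity) (by positivity) (by field_simp; ring)
  rw [← Real.rpow_mul hx.le, ← Real.rpow_mul hC.le] at h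
  have e1 : -(2*t+3) * ((t+3)/(2*t+3)) = -(t+3) := by field_simp
  have e2 : (2*t+3)/t * (t/(2*t+3)) = 1 := by field_simp
  rw [e1, e2, Real.rpow_one] at h
  linarith

theorem radial_mems_barrier_estimate
    (N : ℕ) (hN : 1 ≤ N) (R : ℝ) (hR : 0 < R)
    (a ψ : ℝ → ℝ) (ha : ContinuousOn a (Set.Icc 0 R))
    (hψ : ContinuousOn ψ (Set.Icc 0 R)) (hψ0 : ∀ r ∈ Set.Icc (0:ℝ) R, 0 ≤ ψ r)
    (w : ℝ → ℝ) (hw : ∀ r, w r = exp (a r) * ψ r ^ (N - 1))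
    (lam t : ℝ) (hlam : 0 < lam) (ht : 0 < t) (ht' : t < 2 + Real.sqrt 6)
    (u : ℝ → ℝ) (hu : ContDiff ℝ 1 u)
    (hu01 : ∀ r ∈ Set.Icc (0:ℝ) R, 0 ≤ u r ∧ u r < 1) (huR : u R = 0)
    (hmono : AntitoneOn u (Set.Icc 0 R))
    (hstab : ∀ ξ : ℝ → ℝ, ContDiff ℝ 1 ξ → ξ R = 0 →
      ∫ r in (0:ℝ)..R, w r * (deriv ξ r)^2 ≥
        2 * lam * ∫ r in (0:ℝ)..R, w r * (1 - u r) ^ (-(3:ℝ)) * (ξ r)^2)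
    (hweak : ∀ φ : ℝ → ℝ, ContDiff ℝ 1 φ → φ R = 0 →
      ∫ r in (0:ℝ)..R, w r * deriv u r * deriv φ r =
        lam * ∫ r in (0:ℝ)..R, w r * (1 - u r) ^ (-(2:ℝ)) * φ r)
    (K : ℝ) (hK : 0 ≤ K) (hosc : ∀ r ∈ Set.Icc (0:ℝ) R, u 0 - u r ≤ K * r) :
    ∫ r in (0:ℝ)..R, w r * (1 - u 0 + K * r) ^ (-(2*t+3)) ≤
      (4*(2*t+1)/(2+4*t-t^2)) ^ ((2*t+3)/t) * ∫ r in (0:ℝ)..R, w r := by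
  have h0 : (0:ℝ) ∈ Set.Icc 0 R := ⟨le_rfl, hR.le⟩
  have hRm : R ∈ Set.Icc 0 R := ⟨hR.le, le_rfl⟩
  have hu0 := (hu01 0 h0).2
  have hD : 0 < 2 + 4*t - t^2 := by
    have h6 := Real.sq_sqrt (show (0:ℝ) ≤ 6 by norm_num)
    have h6' : 2 < Real.sqrt 6 := by
      rw [Real.lt_sqrt (by norm_num)]; norm_num
    nlinarith
  have hwc : ContinuousOn w (Set.Icc 0 R) := by
    have : w = fun r => exp (a r) * ψ r ^ (N - 1) := funext hw
    rw [this]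
    exact ha.rexp.mul (hψ.pow _)
  have hw0 : ∀ r ∈ Set.Icc (0:ℝ) R, 0 ≤ w r := by
    intro r hr
    rw [hw]
    exact mul_nonneg (exp_pos _).le (pow_nonneg (hψ0 r hr) _)
  obtain ⟨m, hm, hmpos, hmeq⟩ := mems_pos_ext ((1 - u 0)/2) (by linarith)
  obtain ⟨V, hVdef⟩ : ∃ V : ℝ → ℝ, V = fun r => m (1 - u r) := ⟨_, rfl⟩
  have hVc : ContDiff ℝ 1 V := by
    rw [hVdef]; exact hm.comp (contDiff_const.sub hu)
  have hVpos : ∀ r, 0 < V r := fun r => by rw [hVdef]; exact hmpos _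
  have hgt : ∀ r ∈ Set.Icc (0:ℝ) R, (1 - u 0)/2 < 1 - u r := by
    intro r hr
    have := hmono h0 hr hr.1
    linarith
  have hVeq : ∀ r ∈ Set.Icc (0:ℝ) R, V r = 1 - u r := fun r hr => by
    rw [hVdef]; exact hmeq _ (hgt r hr).le
  have hud : Differentiable ℝ u := hu.differentiable (by norm_num)
  have hVd : ∀ r ∈ Set.Icc (0:ℝ) R, HasDerivAt V (- deriv u r) r := by
    intro r hr
    have h1 : HasDerivAt (fun r => 1 - u r) (- deriv u r) r := by
      simpa using (hud r).hasDerivAt.const_sub 1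
    refine h1.congr_of_eventuallyEq ?_
    have : ContinuousAt (fun r => 1 - u r) r := h1.continuousAt
    filter_upwards [this.eventually (lt_mem_nhds (hgt r hr))] with x hx
    rw [hVdef]; exact hmeq _ (le_of_lt hx)
  have hVp : ∀ p : ℝ, ContDiff ℝ 1 (fun r => V r ^ p) := fun p =>
    hVc.rpow_const_of_ne (fun r => (hVpos r).ne')
  have hVpd : ∀ p : ℝ, ∀ r ∈ Set.Icc (0:ℝ) R,
      deriv (fun r => V r ^ p - 1) r = - p * V r ^ (p - 1) * deriv u r := by
    intro p r hr
    have := ((hVd r hr).rpow_const (p := p) (Or.inl (hVpos r).ne')).sub_const 1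
    rw [this.deriv]; ring
  have hVR : V R = 1 := by rw [hVeq R hRm, huR]; ring
  have hucc : Set.uIcc (0:ℝ) R = Set.Icc 0 R := Set.uIcc_of_le hR.le
  have hint : ∀ f : ℝ → ℝ, ContinuousOn f (Set.Icc 0 R) → IntervalIntegrable f volume 0 R := by
    intro f hf
    apply ContinuousOn.intervalIntegrable
    rwa [hucc]
  have hIc : ∀ p : ℝ, IntervalIntegrable (fun r => w r * V r ^ p) volume 0 R := fun p =>
    hint _ (hwc.mul (hVp p).continuous.continuousOn)
  have hI0 : ∀ p : ℝ, 0 ≤ ∫ r in (0:ℝ)..R, w r * V r ^ p := fun p =>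
    intervalIntegral.integral_nonneg hR.le
      (fun r hr => mul_nonneg (hw0 r hr) (rpow_pos_of_pos (hVpos r) _).le)
  have key1 := hweak (fun r => V r ^ (-(2*t+1)) - 1) ((hVp _).sub contDiff_const)
    (by simp [hVR])
  have key2 := hstab (fun r => V r ^ (-t) - 1) ((hVp _).sub contDiff_const)
    (by simp [hVR])
  have e1 : ∫ r in (0:ℝ)..R, w r * deriv u r * deriv (fun r => V r ^ (-(2*t+1)) - 1) r
      = (2*t+1) * ∫ r in (0:ℝ)..R, w r * V r ^ (-(2*t+2)) * (deriv u r)^2 := by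
    rw [← intervalIntegral.integral_const_mul]
    apply intervalIntegral.integral_congr
    intro r hr
    rw [hucc] at hr
    simp only
    rw [hVpd _ r hr, show -(2*t+1) - 1 = -(2*t+2) by ring]
    ring
  have e2 : ∫ r in (0:ℝ)..R, w r * (deriv (fun r => V r ^ (-t) - 1) r)^2
      = t^2 * ∫ r in (0:ℝ)..R, w r * V r ^ (-(2*t+2)) * (deriv u r)^2 := by
    rw [← intervalIntegral.integral_const_mul]
    apply intervalIntegral.integral_congr
    intro r hr
    rw [hucc] at hr
    simp only
    rw [hVpd _ r hr, show -(2*t+2) = (-t-1) + (-t-1) by ring, rpow_add (hVpos r)]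
    ring
  have e3 : ∫ r in (0:ℝ)..R, w r * (1 - u r) ^ (-(2:ℝ)) * (V r ^ (-(2*t+1)) - 1)
      = (∫ r in (0:ℝ)..R, w r * V r ^ (-(2*t+3))) - ∫ r in (0:ℝ)..R, w r * V r ^ (-(2:ℝ)) := by
    rw [← intervalIntegral.integral_sub (hIc _) (hIc _)]
    apply intervalIntegral.integral_congr
    intro r hr
    rw [hucc] at hr
    simp only
    rw [← hVeq r hr, show -(2*t+3) = -(2:ℝ) + -(2*t+1) by ring, rpow_add (hVpos r)]
    ring
  have e4 : ∫ r in (0:ℝ)..R, w r * (1 - u r) ^ (-(3:ℝ)) * (V r ^ (-t) - 1)^2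
      = (∫ r in (0:ℝ)..R, w r * V r ^ (-(2*t+3))) - 2 * (∫ r in (0:ℝ)..R, w r * V r ^ (-(t+3)))
        + ∫ r in (0:ℝ)..R, w r * V r ^ (-(3:ℝ)) := by
    rw [← intervalIntegral.integral_const_mul,
      ← intervalIntegral.integral_sub (hIc _) ((hIc _).const_mul 2),
      ← intervalIntegral.integral_add ((hIc _).sub ((hIc _).const_mul 2)) (hIc _)]
    apply intervalIntegral.integral_congr
    intro r hr
    rw [hucc] at hr
    simp only
    rw [← hVeq r hr, show -(2*t+3) = -(3:ℝ) + -t + -t by ring, show -(t+3) = -(3:ℝ) + -t by ring,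
      rpow_add (hVpos r), rpow_add (hVpos r)]
    ring
  rw [e1, e3] at key1
  rw [e2, e4] at key2
  have n2 := hI0 (-(2:ℝ))
  have n3 := hI0 (-(3:ℝ))
  obtain ⟨C, hCdef⟩ : ∃ C : ℝ, C = 4*(2*t+1)/(2+4*t-t^2) := ⟨_, rfl⟩
  have hC : 0 < C := by rw [hCdef]; positivity
  rw [← hCdef]
  have young : C * (∫ r in (0:ℝ)..R, w r * V r ^ (-(t+3))) ≤
      (t+3)/(2*t+3) * (∫ r in (0:ℝ)..R, w r * V r ^ (-(2*t+3)))
        + t/(2*t+3) * C ^ ((2*t+3)/t) * ∫ r in (0:ℝ)..R, w r := by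
    rw [← intervalIntegral.integral_const_mul, ← intervalIntegral.integral_const_mul,
      ← intervalIntegral.integral_const_mul,
      ← intervalIntegral.integral_add ((hIc _).const_mul _) ((hint w hwc).const_mul _)]
    apply intervalIntegral.integral_mono_on hR.le ((hIc _).const_mul _)
      (((hIc _).const_mul _).add ((hint w hwc).const_mul _))
    intro r hr
    have := mul_le_mul_of_nonneg_left (mems_young t C (V r) ht hC (hVpos r)) (hw0 r hr)
    linarith
  have barrier : ∫ r in (0:ℝ)..R, w r * (1 - u 0 + K * r) ^ (-(2*t+3)) ≤
      ∫ r in (0:ℝ)..R, w r * V r ^ (-(2*t+3)) := by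
    apply intervalIntegral.integral_mono_on hR.le _ (hIc _)
    · intro r hr
      apply mul_le_mul_of_nonneg_left _ (hw0 r hr)
      apply rpow_le_rpow_of_nonpos (hVpos r) _ (by linarith)
      rw [hVeq r hr]
      linarith [hosc r hr]
    · apply hint
      refine hwc.mul (ContinuousOn.rpow_const (by fun_prop) ?_)
      intro r hr
      left
      have := mul_nonneg hK hr.1
      linarith
  refine barrier.trans ?_
  generalize (∫ r in (0:ℝ)..R, w r * V r ^ (-(2*t+3))) = A at *
  generalize (∫ r in (0:ℝ)..R, w r * V r ^ (-(t+3))) = Q at *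
  generalize (∫ r in (0:ℝ)..R, w r * V r ^ (-(2*t+2)) * (deriv u r)^2) = B at *
  generalize (∫ r in (0:ℝ)..R, w r * V r ^ (-(2:ℝ))) = I2 at *
  generalize (∫ r in (0:ℝ)..R, w r * V r ^ (-(3:ℝ))) = I3 at *
  generalize (∫ r in (0:ℝ)..R, w r) = W at *
  generalize C ^ ((2*t+3)/t) = M at *
  have s1 : lam * (2 * (2*t+1) * (A - 2*Q + I3)) ≤ lam * (t^2 * (A - I2)) := by
    have := mul_le_mul_of_nonneg_left key2 (show 0 ≤ 2*t+1 by linarith)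
    have h2 : (2*t+1) * (t^2 * B) = t^2 * (lam * (A - I2)) := by rw [← key1]; ring
    linarith
  have s2 := le_of_mul_le_mul_left s1 hlam
  have s3 : A ≤ C * Q := by
    rw [hCdef, div_mul_eq_mul_div, le_div_iff₀ hD]
    have p1 := mul_nonneg (sq_nonneg t) n2
    have p2 := mul_nonneg (show 0 ≤ 2*t+1 by linarith) n3
    linarith
  have s4 : A ≤ (t+3)/(2*t+3) * A + t/(2*t+3) * M * W := s3.trans young
  have s5 : t/(2*t+3) * A ≤ t/(2*t+3) * (M * W) := by
    have : (t+3)/(2*t+3) = 1 - t/(2*t+3) := by field_simp; ring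
    rw [this] at s4
    linarith
  exact le_of_mul_le_mul_left s5 (by positivity)
end

section
/- Let N ≥ 1 be an integer, R > 0, let a, ψ : [0,R] → ℝ be continuous with ψ ≥ 0 and with ∫₀^R e^{a(r)}ψ(r)^{N−1} dr > 0, and write w(r) = e^{a(r)}ψ(r)^{N−1}. Let λ > 0, 0 < t < 2 + √6, and let u : [0,R] → ℝ be continuously differentiable, nonincreasing, with 0 ≤ u(r) < 1 for every r ∈ [0,R] and u(R) = 0. Assume the semistability condition (for every C¹ function ξ with ξ(R) = 0, ∫₀^R w(ξ')² dr ≥ 2λ∫₀^R w(1−u)^{−3}ξ² dr), the weak-solution condition (for every C¹ function φ with φ(R) = 0, ∫₀^R w u'φ' dr = λ∫₀^R w(1−u)^{−2}φ dr), and that there is K ≥ 0 with u(0) − u(r) ≤ K r for all r ∈ [0,R]. Then sup_{[0,R]} u = u(0) ≤ 1 + KR − ((2+4t−t²)/(4(2t+1)))^{1/t}. -/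
open MeasureTheory Real intervalIntegral

lemma rmems_test (R : ℝ) (hR : 0 < R) (u : ℝ → ℝ) (hu : ContDiff ℝ 1 u) (huR : u R = 0)
    (m : ℝ) (hm : 0 < m) (hum : ∀ r ∈ Set.Icc (0:ℝ) R, m ≤ 1 - u r) (p : ℝ) :
    ∃ ξ : ℝ → ℝ, ContDiff ℝ 1 ξ ∧ ξ R = 0 ∧
      ∀ r ∈ Set.Icc (0:ℝ) R, ξ r = (1 - u r) ^ (-p) - 1 ∧
        deriv ξ r = p * (1 - u r) ^ (-p - 1) * deriv u r := by
  have hdu : Continuous (deriv u) := hu.continuous_deriv le_rfl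
  have huc : Continuous u := hu.continuous
  set g : ℝ → ℝ := fun s => p * (max (1 - u s) m) ^ (-p - 1) * deriv u s with hg
  have hgc : Continuous g := by
    refine (continuous_const.mul (Continuous.rpow_const (by fun_prop) ?_)).mul hdu
    intro x
    left
    exact (lt_of_lt_of_le hm (le_max_right _ _)).ne'
  have hd : ∀ r, HasDerivAt (fun r => ∫ s in R..r, g s) (g r) r := fun r =>
    intervalIntegral.integral_hasDerivAt_right (hgc.intervalIntegrable _ _)
      (hgc.stronglyMeasurableAtFilter _ _) hgc.continuousAt
  have hder : deriv (fun r => ∫ s in R..r, g s) = g := funext fun r => (hd r).deriv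
  refine ⟨fun r => ∫ s in R..r, g s, ?_, by simp, ?_⟩
  · rw [contDiff_one_iff_deriv, hder]
    exact ⟨fun r => (hd r).differentiableAt, hgc⟩
  · intro r hr
    constructor
    · have hsub : Set.uIcc R r ⊆ Set.Icc 0 R := by
        rw [Set.uIcc_of_ge hr.2]
        exact Set.Icc_subset_Icc_left hr.1
      have := intervalIntegral.integral_eq_sub_of_hasDerivAt (a := R) (b := r)
        (f := fun s => (1 - u s) ^ (-p)) (f' := g) ?_ (hgc.intervalIntegrable _ _)
      · simpa [huR] using this
      · intro x hx
        have hx' := hum x (hsub hx)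
        have h1 : HasDerivAt (fun s => 1 - u s) (-deriv u x) x :=
          ((hu.differentiable one_ne_zero) x).hasDerivAt.const_sub 1
        have h2 := h1.rpow_const (p := -p) (Or.inl (lt_of_lt_of_le hm hx').ne')
        have h3 : g x = -deriv u x * -p * (1 - u x) ^ (-p - 1) := by
          simp only [hg, max_eq_left hx']
          ring
        rw [h3]
        exact h2
    · rw [hder]
      simp only [hg, max_eq_left (hum r hr)]

lemma rmems_pt (t k c M v δ : ℝ) (ht : 0 < t) (hk : 0 ≤ k) (hc : 0 < c) (h4 : 4 * c = 2 - k)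
    (hv : 0 < v) (hv1 : v ≤ 1) (hvM : v ≤ M) (hδ : δ = 4 * (c * M ^ (-t) - 1)) (hδ0 : 0 ≤ δ) :
    δ ≤ 2 * (v ^ (-(3:ℝ)) * (v ^ (-t) - 1) ^ 2) -
      k * (v ^ (-(2:ℝ)) * (v ^ (-(2 * t + 1)) - 1)) := by
  have hx : M ^ (-t) ≤ v ^ (-t) := rpow_le_rpow_of_nonpos hv hvM (by linarith)
  have hx1 : 1 ≤ v ^ (-t) := one_le_rpow_of_pos_of_le_one_of_nonpos hv hv1 (by linarith)
  have hb1 : 1 ≤ v ^ (-(3:ℝ)) := one_le_rpow_of_pos_of_le_one_of_nonpos hv hv1 (by norm_num)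
  have hd0 : 0 ≤ v ^ (-(2:ℝ)) := (rpow_pos_of_pos hv _).le
  have he : v ^ (-(2:ℝ)) * v ^ (-(2 * t + 1)) = v ^ (-(3:ℝ)) * (v ^ (-t)) ^ 2 := by
    rw [sq, ← rpow_add hv, ← rpow_add hv, ← rpow_add hv]
    congr 1
    ring
  generalize v ^ (-t) = x at *
  generalize v ^ (-(3:ℝ)) = b at *
  generalize v ^ (-(2:ℝ)) = d at *
  rw [mul_sub d, he]
  have h1 : δ ≤ 4 * (c * x - 1) := by rw [hδ]; gcongr
  have hbx : 1 ≤ b * x := one_le_mul_of_one_le_of_one_le hb1 hx1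
  have h2 : δ ≤ (b * x) * (4 * (c * x - 1)) := by nlinarith
  have hkd : 0 ≤ k * d := mul_nonneg hk hd0
  have hk' : k = 2 - 4 * c := by linarith
  have : (b * x) * (4 * (c * x - 1)) + 2 * b + k * d =
      2 * (b * (x - 1) ^ 2) - k * (b * x ^ 2 - d * 1) := by rw [hk']; ring
  linarith

theorem radial_mems_Linfty_bound
    (N : ℕ) (hN : 1 ≤ N) (R : ℝ) (hR : 0 < R)
    (a ψ : ℝ → ℝ) (ha : ContinuousOn a (Set.Icc 0 R))
    (hψ : ContinuousOn ψ (Set.Icc 0 R)) (hψ0 : ∀ r ∈ Set.Icc (0:ℝ) R, 0 ≤ ψ r)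
    (w : ℝ → ℝ) (hw : ∀ r, w r = exp (a r) * ψ r ^ (N - 1))
    (hwint : 0 < ∫ r in (0:ℝ)..R, w r)
    (lam t : ℝ) (hlam : 0 < lam) (ht : 0 < t) (ht' : t < 2 + Real.sqrt 6)
    (u : ℝ → ℝ) (hu : ContDiff ℝ 1 u) (hmono : AntitoneOn u (Set.Icc 0 R))
    (hu01 : ∀ r ∈ Set.Icc (0:ℝ) R, 0 ≤ u r ∧ u r < 1) (huR : u R = 0)
    (hstab : ∀ ξ : ℝ → ℝ, ContDiff ℝ 1 ξ → ξ R = 0 →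
      ∫ r in (0:ℝ)..R, w r * (deriv ξ r)^2 ≥
        2 * lam * ∫ r in (0:ℝ)..R, w r * (1 - u r) ^ (-(3:ℝ)) * (ξ r)^2)
    (hweak : ∀ φ : ℝ → ℝ, ContDiff ℝ 1 φ → φ R = 0 →
      ∫ r in (0:ℝ)..R, w r * deriv u r * deriv φ r =
        lam * ∫ r in (0:ℝ)..R, w r * (1 - u r) ^ (-(2:ℝ)) * φ r)
    (K : ℝ) (hK : 0 ≤ K) (hosc : ∀ r ∈ Set.Icc (0:ℝ) R, u 0 - u r ≤ K * r) :
    sSup (u '' Set.Icc 0 R) = u 0 ∧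
      u 0 ≤ 1 + K * R - ((2+4*t-t^2)/(4*(2*t+1))) ^ (1/t) := by
  have h0 : (0:ℝ) ∈ Set.Icc (0:ℝ) R := ⟨le_rfl, hR.le⟩
  have hle : ∀ r ∈ Set.Icc (0:ℝ) R, u r ≤ u 0 := fun r hr => hmono h0 hr hr.1
  constructor
  · apply IsGreatest.csSup_eq
    refine ⟨⟨0, h0, rfl⟩, ?_⟩
    rintro _ ⟨r, hr, rfl⟩
    exact hle r hr
  by_contra hcon
  push Not at hcon
  set c := (2+4*t-t^2)/(4*(2*t+1)) with hcdef
  set k := t^2/(2*t+1) with hkdef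
  set M := 1 - u 0 + K * R with hMdef
  have hu0 : u 0 < 1 := (hu01 0 h0).2
  have hM : 0 < M := by have := mul_nonneg hK hR.le; simp only [hMdef]; linarith
  have h2t : 0 < 2 * t + 1 := by linarith
  have hc : 0 < c := by
    apply div_pos _ (by linarith)
    have h6 : Real.sqrt 6 ^ 2 = 6 := Real.sq_sqrt (by norm_num)
    have h62 : 2 < Real.sqrt 6 := by
      rw [Real.lt_sqrt (by norm_num)]; norm_num
    nlinarith [mul_pos (sub_pos.2 ht') (by linarith : 0 < t - 2 + Real.sqrt 6)]
  have hk : 0 ≤ k := by positivity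
  have h4 : 4 * c = 2 - k := by
    simp only [hcdef, hkdef]
    field_simp
    ring
  have hMc : M ^ t < c := by
    have h1 : M < c ^ (1/t) := by simp only [hMdef]; linarith
    have h2 := rpow_lt_rpow hM.le h1 ht
    rwa [← rpow_mul hc.le, one_div, inv_mul_cancel₀ ht.ne', rpow_one] at h2
  have hδ : 0 < 4 * (c * M ^ (-t) - 1) := by
    have hp := rpow_pos_of_pos hM t
    have : 1 < c * M ^ (-t) := by
      rw [rpow_neg hM.le, ← div_eq_mul_inv, one_lt_div hp]
      exact hMc
    linarith
  have hum : ∀ r ∈ Set.Icc (0:ℝ) R, 1 - u 0 ≤ 1 - u r := fun r hr => by linarith [hle r hr]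
  obtain ⟨ξ, hξ, hξR, hξe⟩ := rmems_test R hR u hu huR (1 - u 0) (by linarith) hum t
  obtain ⟨φ, hφ, hφR, hφe⟩ := rmems_test R hR u hu huR (1 - u 0) (by linarith) hum (2*t+1)
  have hs := hstab ξ hξ hξR
  have hwk := hweak φ hφ hφR
  have huI : Set.uIcc 0 R = Set.Icc 0 R := Set.uIcc_of_le hR.le
  have e1 : ∫ r in (0:ℝ)..R, w r * (deriv ξ r)^2 =
      k * ∫ r in (0:ℝ)..R, w r * deriv u r * deriv φ r := by
    rw [← intervalIntegral.integral_const_mul]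
    apply intervalIntegral.integral_congr
    intro r hr
    rw [huI] at hr
    have hv : 0 < 1 - u r := by linarith [(hu01 r hr).2]
    simp only [(hξe r hr).2, (hφe r hr).2]
    have : (1 - u r) ^ (-(2*t+1) - 1) = ((1 - u r) ^ (-t - 1)) ^ 2 := by
      rw [sq, ← rpow_add hv]
      congr 1
      ring
    rw [this]
    simp only [hkdef]
    field_simp
  rw [e1, hwk] at hs
  have hwc : ContinuousOn w (Set.Icc 0 R) := by
    have : w = fun r => exp (a r) * ψ r ^ (N - 1) := funext hw
    rw [this]
    exact (Real.continuous_exp.comp_continuousOn ha).mul (hψ.pow _)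
  have hw0 : ∀ r ∈ Set.Icc (0:ℝ) R, 0 ≤ w r := fun r hr => by
    rw [hw]
    exact mul_nonneg (exp_pos _).le (pow_nonneg (hψ0 r hr) _)
  have hvc : ∀ q : ℝ, ContinuousOn (fun r => (1 - u r) ^ q) (Set.Icc 0 R) := fun q => by
    refine ContinuousOn.rpow_const (continuous_const.sub hu.continuous).continuousOn ?_
    intro r hr
    left
    exact (by linarith [(hu01 r hr).2] : 0 < 1 - u r).ne'
  have i0 : IntervalIntegrable w volume 0 R :=
    ContinuousOn.intervalIntegrable (by rw [huI]; exact hwc)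
  have i1 : IntervalIntegrable (fun r => w r * (1 - u r) ^ (-(3:ℝ)) * (ξ r)^2) volume 0 R :=
    ContinuousOn.intervalIntegrable (by
      rw [huI]; exact (hwc.mul (hvc _)).mul (hξ.continuous.continuousOn.pow 2))
  have i2 : IntervalIntegrable (fun r => w r * (1 - u r) ^ (-(2:ℝ)) * φ r) volume 0 R :=
    ContinuousOn.intervalIntegrable (by
      rw [huI]; exact (hwc.mul (hvc _)).mul hφ.continuous.continuousOn)
  have key : ∫ r in (0:ℝ)..R, (4 * (c * M ^ (-t) - 1)) * w r ≤
      ∫ r in (0:ℝ)..R, (2 * (w r * (1 - u r) ^ (-(3:ℝ)) * (ξ r)^2) -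
        k * (w r * (1 - u r) ^ (-(2:ℝ)) * φ r)) := by
    apply intervalIntegral.integral_mono_on hR.le (i0.const_mul _)
      ((i1.const_mul _).sub (i2.const_mul _))
    intro r hr
    have hvM : 1 - u r ≤ M := by
      have h1 := hosc r hr
      have h2 := mul_le_mul_of_nonneg_left hr.2 hK
      simp only [hMdef]
      linarith
    have hp := rmems_pt t k c M (1 - u r) _ ht hk hc h4 (by linarith [(hu01 r hr).2])
      (by linarith [(hu01 r hr).1]) hvM rfl hδ.le
    have hp2 := mul_le_mul_of_nonneg_left hp (hw0 r hr)
    rw [(hξe r hr).1, (hφe r hr).1]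
    linarith
  rw [intervalIntegral.integral_sub (i1.const_mul _) (i2.const_mul _),
    intervalIntegral.integral_const_mul, intervalIntegral.integral_const_mul,
    intervalIntegral.integral_const_mul] at key
  have hpos := mul_pos hδ hwint
  have hlt := mul_pos hlam (lt_of_lt_of_le hpos key)
  linarith
end

section
/- Let N ≥ 1 be an integer, R > 0, let a, ψ : [0,R] → ℝ be continuous with ψ ≥ 0 and with ∫₀^R e^{a(r)}ψ(r)^{N−1} dr > 0, and write w(r) = e^{a(r)}ψ(r)^{N−1}. Let λ > 0, m > 1, b > 0, t > 0 with m − √(m(m−1)) < bt < m + √(m(m−1)), and let u : [0,R] → ℝ be continuously differentiable, nonincreasing, with u ≥ 0 and u(R) = 0. Assume the semistability condition (for every C¹ function ξ with ξ(R) = 0, ∫₀^R w(ξ')² dr ≥ λm∫₀^R w(1+u)^{m−1}ξ² dr), the weak-solution condition (for every C¹ function φ with φ(R) = 0, ∫₀^R w u'φ' dr = λ∫₀^R w(1+u)^m φ dr), and that there is K ≥ 0 with u(0) − u(r) ≤ K r for all r ∈ [0,R]. Then sup_{[0,R]} u = u(0) ≤ KR − 1 + [2m(2bt−1)/(m(2bt−1)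 − b²t²)]^{1/(bt)}. -/
open MeasureTheory Real intervalIntegral

lemma exists_pow_ext (p : ℝ) : ∃ g : ℝ → ℝ, ContDiff ℝ 1 g ∧
    (∀ x, 0 ≤ x → g x = (1 + x) ^ p - 1) ∧
    (∀ x, 0 ≤ x → deriv g x = p * (1 + x) ^ (p - 1)) := by
  have hc : Continuous (fun y : ℝ => p * (1 + max y 0) ^ (p - 1)) := by
    refine continuous_const.mul (Continuous.rpow_const (by fun_prop) ?_)
    intro y
    left
    have := le_max_right y 0
    linarith
  have hd : ∀ x, HasDerivAt (fun x => ∫ y in (0:ℝ)..x, p * (1 + max y 0) ^ (p - 1))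
      (p * (1 + max x 0) ^ (p - 1)) x := fun x =>
    integral_hasDerivAt_right (hc.intervalIntegrable _ _)
      (hc.stronglyMeasurableAtFilter _ _) hc.continuousAt
  refine ⟨fun x => ∫ y in (0:ℝ)..x, p * (1 + max y 0) ^ (p - 1), ?_, ?_, ?_⟩
  · rw [contDiff_one_iff_deriv]
    refine ⟨fun x => (hd x).differentiableAt, ?_⟩
    rw [show deriv _ = _ from funext fun x => (hd x).deriv]
    exact hc
  · intro x hx
    have : ∫ y in (0:ℝ)..x, p * (1 + max y 0) ^ (p - 1) = (1 + x) ^ p - (1 + 0) ^ p := by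
      apply integral_eq_sub_of_hasDerivAt (f := fun y : ℝ => (1 + y) ^ p) _
        (hc.intervalIntegrable _ _)
      intro y hy
      rw [Set.uIcc_of_le hx] at hy
      rw [max_eq_left hy.1]
      have h1 : HasDerivAt (fun y : ℝ => 1 + y) 1 y := (hasDerivAt_id y).const_add 1
      have := h1.rpow_const (p := p) (Or.inl (by linarith [hy.1]))
      simpa using this
    simp only [this]
    simp
  · intro x hx
    rw [(hd x).deriv, max_eq_left hx]

theorem radial_power_Linfty_bound
    (N : ℕ) (hN : 1 ≤ N) (R : ℝ) (hR : 0 < R)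
    (a ψ : ℝ → ℝ) (ha : ContinuousOn a (Set.Icc 0 R))
    (hψ : ContinuousOn ψ (Set.Icc 0 R)) (hψ0 : ∀ r ∈ Set.Icc (0:ℝ) R, 0 ≤ ψ r)
    (w : ℝ → ℝ) (hw : ∀ r, w r = exp (a r) * ψ r ^ (N - 1))
    (hwint : 0 < ∫ r in (0:ℝ)..R, w r)
    (lam m b t : ℝ) (hlam : 0 < lam) (hm : 1 < m) (hb : 0 < b) (ht : 0 < t)
    (hbt1 : m - Real.sqrt (m*(m-1)) < b*t) (hbt2 : b*t < m + Real.sqrt (m*(m-1)))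
    (u : ℝ → ℝ) (hu : ContDiff ℝ 1 u) (hmono : AntitoneOn u (Set.Icc 0 R))
    (hu0 : ∀ r ∈ Set.Icc (0:ℝ) R, 0 ≤ u r) (huR : u R = 0)
    (hstab : ∀ ξ : ℝ → ℝ, ContDiff ℝ 1 ξ → ξ R = 0 →
      ∫ r in (0:ℝ)..R, w r * (deriv ξ r)^2 ≥
        lam * m * ∫ r in (0:ℝ)..R, w r * (1 + u r) ^ (m-1) * (ξ r)^2)
    (hweak : ∀ φ : ℝ → ℝ, ContDiff ℝ 1 φ → φ R = 0 →
      ∫ r in (0:ℝ)..R, w r * deriv u r * deriv φ r =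
        lam * ∫ r in (0:ℝ)..R, w r * (1 + u r) ^ m * φ r)
    (K : ℝ) (hK : 0 ≤ K) (hosc : ∀ r ∈ Set.Icc (0:ℝ) R, u 0 - u r ≤ K * r) :
    sSup (u '' Set.Icc 0 R) = u 0 ∧
      u 0 ≤ K * R - 1 +
        (2*m*(2*b*t - 1)/(m*(2*b*t - 1) - b^2*t^2)) ^ (1/(b*t)) := by
  have h0R : (0:ℝ) ∈ Set.Icc 0 R := ⟨le_rfl, hR.le⟩
  refine ⟨IsGreatest.csSup_eq ⟨⟨0, h0R, rfl⟩, ?_⟩, ?_⟩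
  · rintro _ ⟨r, hr, rfl⟩
    exact hmono h0R hr hr.1
  obtain ⟨s, hs⟩ : ∃ s, s = b * t := ⟨_, rfl⟩
  have hs0 : 0 < s := hs ▸ mul_pos hb ht
  have e1 : 2 * b * t = 2 * s := by rw [hs]; ring
  have e2 : b ^ 2 * t ^ 2 = s ^ 2 := by rw [hs]; ring
  rw [e1, e2, ← hs]
  rw [← hs] at hbt1 hbt2
  have hmm : 0 ≤ m * (m - 1) := by nlinarith
  have hsq := Real.sq_sqrt hmm
  have hsq0 := Real.sqrt_nonneg (m * (m - 1))
  have hs1 : 0 < 2 * s - 1 := by nlinarith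
  have hD : 0 < m * (2 * s - 1) - s ^ 2 := by nlinarith
  have hM : 0 < m * (2 * s - 1) := by nlinarith
  by_contra hcon
  push Not at hcon
  set C := 2 * m * (2 * s - 1) / (m * (2 * s - 1) - s ^ 2) with hC
  have hC0 : 0 < C := div_pos (by nlinarith) hD
  have hCD : C * (m * (2 * s - 1) - s ^ 2) = 2 * m * (2 * s - 1) := by
    rw [hC]; field_simp
  have hY : ∀ r ∈ Set.Icc (0:ℝ) R, C ≤ (1 + u r) ^ s := by
    intro r hr
    have h1 := hosc r hr
    have h2 : K * r ≤ K * R := mul_le_mul_of_nonneg_left hr.2 hK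
    have h3 : C ^ (1 / s) ≤ 1 + u r := by linarith
    calc C = (C ^ (1 / s)) ^ s := by
          rw [← Real.rpow_mul hC0.le, one_div_mul_cancel hs0.ne', Real.rpow_one]
      _ ≤ _ := Real.rpow_le_rpow (by positivity) h3 hs0.le
  have hwc : ContinuousOn w (Set.Icc 0 R) := by
    rw [show w = _ from funext hw]
    exact (Real.continuous_exp.comp_continuousOn ha).mul (hψ.pow _)
  have hw0 : ∀ r ∈ Set.Icc (0:ℝ) R, 0 ≤ w r := by
    intro r hr
    rw [hw]
    exact mul_nonneg (Real.exp_pos _).le (pow_nonneg (hψ0 r hr) _)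
  have hvc : ∀ p : ℝ, ContinuousOn (fun r => (1 + u r) ^ p) (Set.Icc 0 R) := by
    intro p
    refine ContinuousOn.rpow_const (by have := hu.continuous; fun_prop) ?_
    intro r hr
    left
    have := hu0 r hr
    linarith
  have hII : ∀ f : ℝ → ℝ, ContinuousOn f (Set.Icc 0 R) → IntervalIntegrable f volume 0 R :=
    fun f hf => hf.intervalIntegrable_of_Icc hR.le
  have hcongr : ∀ f g : ℝ → ℝ, (∀ r ∈ Set.Icc (0:ℝ) R, f r = g r) →
      ∫ r in (0:ℝ)..R, f r = ∫ r in (0:ℝ)..R, g r := by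
    intro f g h
    apply integral_congr
    intro r hr
    rw [Set.uIcc_of_le hR.le] at hr
    exact h r hr
  obtain ⟨g, hg, hg1, hg2⟩ := exists_pow_ext s
  obtain ⟨k, hk, hk1, hk2⟩ := exists_pow_ext (2 * s - 1)
  have hdiff : ∀ g : ℝ → ℝ, ContDiff ℝ 1 g → ∀ r,
      deriv (fun r => g (u r)) r = deriv g (u r) * deriv u r := by
    intro g hg r
    exact deriv_comp r (hg.differentiable one_ne_zero _) (hu.differentiable one_ne_zero _)
  have S := hstab (fun r => g (u r)) (hg.comp hu) (by simp [huR, hg1 0 le_rfl])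
  have W := hweak (fun r => k (u r)) (hk.comp hu) (by simp [huR, hk1 0 le_rfl])
  obtain ⟨E, hE⟩ : ∃ E, E = ∫ r in (0:ℝ)..R, w r * (deriv u r ^ 2 * (1 + u r) ^ (2 * s - 2)) :=
    ⟨_, rfl⟩
  have S1 : ∫ r in (0:ℝ)..R, w r * (deriv (fun r => g (u r)) r) ^ 2 = s ^ 2 * E := by
    rw [hE, ← intervalIntegral.integral_const_mul]
    apply hcongr
    intro r hr
    have h0 := hu0 r hr
    rw [hdiff g hg, hg2 _ h0, show 2 * s - 2 = (s - 1) + (s - 1) by ring,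
      Real.rpow_add (by linarith)]
    ring
  have W1 : ∫ r in (0:ℝ)..R, w r * deriv u r * deriv (fun r => k (u r)) r = (2 * s - 1) * E := by
    rw [hE, ← intervalIntegral.integral_const_mul]
    apply hcongr
    intro r hr
    have h0 := hu0 r hr
    rw [hdiff k hk, hk2 _ h0, show 2 * s - 1 - 1 = 2 * s - 2 by ring]
    ring
  have S2 := hcongr (fun r => w r * (1 + u r) ^ (m - 1) * (g (u r)) ^ 2)
    (fun r => w r * (1 + u r) ^ (m - 1) * ((1 + u r) ^ s - 1) ^ 2)
    (fun r hr => by simp only [hg1 _ (hu0 r hr)])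
  have W2 := hcongr (fun r => w r * (1 + u r) ^ m * k (u r))
    (fun r => w r * (1 + u r) ^ m * ((1 + u r) ^ (2 * s - 1) - 1))
    (fun r hr => by simp only [hk1 _ (hu0 r hr)])
  rw [S1, S2] at S
  rw [W1, W2] at W
  have cI : ContinuousOn (fun r => w r * (1 + u r) ^ (m - 1) * ((1 + u r) ^ s - 1) ^ 2)
      (Set.Icc 0 R) :=
    (hwc.mul (hvc _)).mul (((hvc _).sub continuousOn_const).pow 2)
  have cJ : ContinuousOn (fun r => w r * (1 + u r) ^ m * ((1 + u r) ^ (2 * s - 1) - 1))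
      (Set.Icc 0 R) :=
    (hwc.mul (hvc _)).mul ((hvc _).sub continuousOn_const)
  have key : ∫ r in (0:ℝ)..R, (m * (2 * s - 1)) * w r ≤ ∫ r in (0:ℝ)..R,
      ((m * (2 * s - 1)) * (w r * (1 + u r) ^ (m - 1) * ((1 + u r) ^ s - 1) ^ 2) -
      s ^ 2 * (w r * (1 + u r) ^ m * ((1 + u r) ^ (2 * s - 1) - 1))) := by
    apply integral_mono_on hR.le ((hII _ hwc).const_mul _)
      (((hII _ cI).const_mul _).sub ((hII _ cJ).const_mul _))
    intro r hr
    have h0 := hu0 r hr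
    have hv : 0 < 1 + u r := by linarith
    have hY' := hY r hr
    have hV : 1 ≤ (1 + u r) ^ (m - 1) := Real.one_le_rpow (by linarith) (by linarith)
    have em : (1 + u r) ^ m = (1 + u r) ^ (m - 1) * (1 + u r) := by
      rw [← Real.rpow_add_one hv.ne']; ring_nf
    have es : (1 + u r) * (1 + u r) ^ (2 * s - 1) = ((1 + u r) ^ s) ^ 2 := by
      rw [mul_comm, ← Real.rpow_add_one hv.ne', sq, ← Real.rpow_add hv]; ring_nf
    rw [em]
    generalize (1 + u r) ^ (m - 1) = V at *
    generalize (1 + u r) ^ (2 * s - 1) = Z at *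
    generalize (1 + u r) ^ s = Y at *
    have id1 : (m * (2 * s - 1)) * (w r * V * (Y - 1) ^ 2) -
        s ^ 2 * (w r * (V * (1 + u r)) * (Z - 1)) - (m * (2 * s - 1)) * w r
        = w r * (V * Y * ((m * (2 * s - 1) - s ^ 2) * (Y - C)) + s ^ 2 * ((1 + u r) * V)
          + m * (2 * s - 1) * (V - 1)) := by
      linear_combination (-s ^ 2 * w r * V) * es + w r * V * Y * hCD
    have hYp : 0 < Y := lt_of_lt_of_le hC0 hY'
    have : 0 ≤ w r * (V * Y * ((m * (2 * s - 1) - s ^ 2) * (Y - C)) + s ^ 2 * ((1 + u r) * V)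
          + m * (2 * s - 1) * (V - 1)) := by
      have a1 : 0 ≤ Y - C := by linarith
      have a2 : 0 ≤ V - 1 := by linarith
      have a3 : 0 ≤ V := by linarith
      have a4 := hw0 r hr
      have a5 := hD.le
      have a6 := hM.le
      have a7 := hv.le
      have a8 := hYp.le
      refine mul_nonneg a4 (add_nonneg (add_nonneg ?_ ?_) (mul_nonneg a6 a2))
      · exact mul_nonneg (mul_nonneg a3 a8) (mul_nonneg a5 a1)
      · exact mul_nonneg (sq_nonneg s) (mul_nonneg a7 a3)
    linarith
  rw [intervalIntegral.integral_sub ((hII _ cI).const_mul _) ((hII _ cJ).const_mul _),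
    intervalIntegral.integral_const_mul, intervalIntegral.integral_const_mul,
    intervalIntegral.integral_const_mul] at key
  generalize (∫ r in (0:ℝ)..R, w r * (1 + u r) ^ (m - 1) * ((1 + u r) ^ s - 1) ^ 2) = I at *
  generalize (∫ r in (0:ℝ)..R, w r * (1 + u r) ^ m * ((1 + u r) ^ (2 * s - 1) - 1)) = J at *
  have hpos := mul_pos hM hwint
  have h1 : 0 < m * (2 * s - 1) * I - s ^ 2 * J := by linarith
  have h2 := mul_pos hlam h1
  have h3 := mul_le_mul_of_nonneg_left S hs1.le
  have h4 : lam * (m * (2 * s - 1) * I - s ^ 2 * J)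
      = (2 * s - 1) * (lam * m * I) - (2 * s - 1) * (s ^ 2 * E) := by
    linear_combination s ^ 2 * W
  linarith
end

section
/- Fix real numbers ε ∈ (0,1) and p > 1, and define g_ε : ℝ → ℝ by g_ε(s) = (1−s)^{−2} for s < 1−ε and g_ε(s) = 1/ε² − 2(1−ε)/(pε³) + 2s^p/(pε³(1−ε)^{p−1}) for s ≥ 1−ε, and let G_ε(s) = ∫_{−∞}^{s} g_ε(σ) dσ (this integral converges for every s, with G_ε(s) = (1−s)^{−1} for s ≤ 1−ε). Then for every θ with 2 < θ < p+1 there exists M > 0 such that θ·G_ε(s) ≤ s·g_ε(s) for all s ≥ M. -/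
open MeasureTheory Real

theorem truncated_mems_ambrosetti_rabinowitz
    (ε p : ℝ) (hε : 0 < ε) (hε1 : ε < 1) (hp : 1 < p)
    (g G : ℝ → ℝ)
    (hg : ∀ s, g s = if s < 1 - ε then (1 - s) ^ (-(2:ℝ))
      else 1/ε^2 - 2*(1-ε)/(p*ε^3) + 2*s^p/(p*ε^3*(1-ε)^(p-1)))
    (hG : ∀ s, G s = ∫ σ in Set.Iic s, g σ) :
    ∀ θ : ℝ, 2 < θ → θ < p + 1 →
      ∃ M > 0, ∀ s ≥ M, θ * G s ≤ s * g s := by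
  intro θ hθ2 hθp
  have hb : 0 < 1 - ε := by linarith
  obtain ⟨A, hA⟩ : ∃ A, A = 1/ε^2 - 2*(1-ε)/(p*ε^3) := ⟨_, rfl⟩
  obtain ⟨K, hK⟩ : ∃ K, K = 2/(p*ε^3*(1-ε)^(p-1)) := ⟨_, rfl⟩
  obtain ⟨b, hbd⟩ : ∃ b, b = 1 - ε := ⟨_, rfl⟩
  have hp0 : 0 < p := by linarith
  have hK0 : 0 < K := by rw [hK]; positivity
  have hgs : ∀ s, b ≤ s → g s = A + K * s ^ p := by
    intro s hs
    rw [hg, if_neg (by linarith), hA, hK]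
    ring
  obtain ⟨C, hC⟩ : ∃ C, C = ∫ σ in Set.Iic b, g σ := ⟨_, rfl⟩
  have hGs : ∀ s, b ≤ s → G s = 0 ∨
      G s = C + (A * (s - b) + K * ((s ^ (p+1) - b ^ (p+1)) / (p+1))) := by
    intro s hs
    by_cases hi : IntegrableOn g (Set.Iic s)
    · right
      have h1 := intervalIntegral.integral_Iic_sub_Iic
        (hi.mono_set (Set.Iic_subset_Iic.2 hs)) hi
      have h2 : ∫ x in b..s, g x = ∫ x in b..s, (A + K * x ^ p) := by
        apply intervalIntegral.integral_congr
        intro x hx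
        rw [Set.uIcc_of_le hs] at hx
        exact hgs x hx.1
      have h3 : IntervalIntegrable (fun x : ℝ => x ^ p) volume b s :=
        intervalIntegral.intervalIntegrable_rpow' (by linarith)
      rw [intervalIntegral.integral_add (by simp) (h3.const_mul K),
        intervalIntegral.integral_const_mul, integral_rpow (Or.inl (by linarith)),
        intervalIntegral.integral_const, smul_eq_mul] at h2
      rw [hG, hC]
      linarith
    · left
      rw [hG]
      exact integral_undef hi
  obtain ⟨K', hK'⟩ : ∃ K', K' = K * (1 - θ / (p+1)) := ⟨_, rfl⟩
  have hK'0 : 0 < K' := by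
    rw [hK']
    have : θ / (p+1) < 1 := by rw [div_lt_one (by linarith)]; exact hθp
    exact mul_pos hK0 (by linarith)
  obtain ⟨D, hD⟩ : ∃ D, D = θ * (C - A * b - K * (b ^ (p+1) / (p+1))) := ⟨_, rfl⟩
  obtain ⟨E, hE⟩ : ∃ E, E = θ * A - A := ⟨_, rfl⟩
  have ht := tendsto_rpow_atTop hp0
  obtain ⟨M, hM⟩ := Filter.eventually_atTop.1
    ((ht.eventually_ge_atTop (|A| / K)).and (ht.eventually_ge_atTop ((|D| + |E|) / K')))
  refine ⟨max M 1, by positivity, fun s hs => ?_⟩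
  have hs1 : 1 ≤ s := le_trans (le_max_right _ _) hs
  obtain ⟨h1, h2⟩ := hM s (le_trans (le_max_left _ _) hs)
  rw [div_le_iff₀ hK0] at h1
  rw [div_le_iff₀ hK'0] at h2
  have hbs : b ≤ s := by linarith
  rw [hgs s hbs]
  rcases hGs s hbs with h | h
  · rw [h, mul_zero]
    apply mul_nonneg (by linarith)
    have := neg_abs_le A
    linarith
  · have hpow : s ^ (p+1) = s ^ p * s := by
      rw [rpow_add (by linarith), rpow_one]
    have h4 : (|D| + |E|) * s ≤ s ^ p * K' * s := mul_le_mul_of_nonneg_right h2 (by linarith)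
    have h5 : D ≤ |D| * s := by nlinarith [le_abs_self D, abs_nonneg D]
    have h6 : E * s ≤ |E| * s := mul_le_mul_of_nonneg_right (le_abs_self E) (by linarith)
    have h7 : D + E * s ≤ s ^ p * K' * s := by linarith
    have h8 : s * (A + K * s ^ p) - θ * G s = s ^ p * K' * s - (D + E * s) := by
      rw [h, hpow, hK', hD, hE]; ring
    linarith
end
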